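/- arXiv:1705.06372 — 2 statements merged into one kernel-verified Lean document; each statement's English description precedes it below -/
import Mathlib

section
/- Let q = 2^h with h > 5, let α₁, α₂, α₃, α₄ ∈ F_q \ {0} be F_2-independent with α_i²/α₄ ∈ ⟨α₁,α₂,α₃,α₄⟩ for i = 1,2,3, let S = {x ∈ F_q : Tr(α_i x) = 0 for i = 1,...,4}, let α ∈ ⟨α₁,α₂,α₃,α₄⟩ be such that {α₁(α₁+α₄), α₂(α₂+α₄), α₃(α₃+α₄), α₄α} is F_2-independent, and let β₁, β₂, β₃ ∈ F_q \ {0} satisfy Tr(α_i β_j) = δ_ij for i = 1,...,4 and j = 1,2,3. Then the point set A produced by the q/16-construction from these data is a KM-arc of type q/16 in PG(2,q) whose q/16-nucleus is (0:0:1), and A is an elation KM-arc with elation line X = 0 (for every γ ∈ F_q the set {z : (1:γ:z) ∈ A} is empty or a coset of S). -/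
open scoped Classical

noncomputable section

variable {K : Type*} [Field K]

/-- The absolute trace-style sum `x + x² + x⁴ + ⋯ + x^(2^(h-1))`
(it lands in the prime subfield `F₂` when `|K| = 2^h`). -/
def Tr (h : ℕ) (x : K) : K := ∑ i ∈ Finset.range h, x ^ 2 ^ i

/-- `F₂`-independence of a tuple of elements of a field of characteristic two:
no nontrivial combination with coefficients `0`/`1` vanishes. -/
def F2Indep {n : ℕ} (v : Fin n → K) : Prop :=
  ∀ c : Fin n → K, (∀ i, c i = 0 ∨ c i = 1) → ∑ i, c i * v i = 0 → ∀ i, c i = 0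

/-- The `F₂`-span of a tuple of elements of a field of characteristic two. -/
def F2Span {n : ℕ} (v : Fin n → K) : Set K :=
  {x | ∃ c : Fin n → K, (∀ i, c i = 0 ∨ c i = 1) ∧ x = ∑ i, c i * v i}

/-- `α·S` for an additive subgroup `S` of the field. -/
def smulSub (α : K) (S : AddSubgroup K) : AddSubgroup K :=
  S.map (AddMonoidHom.mulLeft α)

/-- Points of `PG(2,q)`: one-dimensional subspaces of `K³`. -/
abbrev Pt (K : Type*) [Field K] := Projectivization K (Fin 3 → K)

/-- The point `(a : b : c)` of `PG(2,q)`. -/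
def pt3 (a b c : K) (habc : ¬(a = 0 ∧ b = 0 ∧ c = 0)) : Pt K :=
  Projectivization.mk K ![a, b, c] (fun h0 => habc
    ⟨by simpa using congrFun h0 0, by simpa using congrFun h0 1, by simpa using congrFun h0 2⟩)

/-- The point `(a : b)` of `PG(1,q)`. -/
def pt2 (a b : K) (hab : ¬(a = 0 ∧ b = 0)) : Projectivization K (Fin 2 → K) :=
  Projectivization.mk K ![a, b] (fun h0 => hab
    ⟨by simpa using congrFun h0 0, by simpa using congrFun h0 1⟩)

/-- An `F₂`-linear set of points of `PG(1,q)`: in characteristic two, the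
`F₂`-subspaces of `K²` are exactly its additive subgroups. -/
def IsF2Linear (T : Set (Projectivization K (Fin 2 → K))) : Prop :=
  ∃ U : AddSubgroup (Fin 2 → K),
    T = {P | ∃ u : Fin 2 → K, ∃ hu : u ≠ 0, u ∈ U ∧ Projectivization.mk K u hu = P}

/-- Lines of `PG(2,q)`: two-dimensional subspaces of `K³`. -/
def IsLine (L : Submodule K (Fin 3 → K)) : Prop := Module.finrank K L = 2

/-- Incidence of a point with a line. -/
def OnLine (P : Pt K) (L : Submodule K (Fin 3 → K)) : Prop := P.submodule ≤ L

/-- The number of points of `A` lying on the line `L`. -/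
def secantCount (A : Set (Pt K)) (L : Submodule K (Fin 3 → K)) : ℕ :=
  {P ∈ A | OnLine P L}.ncard

/-- A KM-arc of type `t`: `q+t` points meeting every line in `0`, `2` or `t` points. -/
def IsKMArc (q t : ℕ) (A : Set (Pt K)) : Prop :=
  A.ncard = q + t ∧ ∀ L : Submodule K (Fin 3 → K), IsLine L →
    secantCount A L = 0 ∨ secantCount A L = 2 ∨ secantCount A L = t

/-- The projectivity of `PG(2,q)` induced by an element of `GL(3,q)`. -/
def projMap (f : (Fin 3 → K) ≃ₗ[K] (Fin 3 → K)) : Pt K → Pt K :=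
  Projectivization.map f.toLinearMap f.injective

/-- `f` induces an elation with axis `L` and centre `R`: it fixes every point of `L`
and maps every line through `R` to itself. -/
def IsElation (f : (Fin 3 → K) ≃ₗ[K] (Fin 3 → K)) (L : Submodule K (Fin 3 → K))
    (R : Pt K) : Prop :=
  IsLine L ∧ OnLine R L ∧ (∀ P : Pt K, OnLine P L → projMap f P = P) ∧
    ∀ M : Submodule K (Fin 3 → K), IsLine M → OnLine R M →
      ∀ P : Pt K, OnLine P M → OnLine (projMap f P) M

/-- `f` induces an elation with axis `L` (for some centre on `L`). -/
def IsElationAxis (f : (Fin 3 → K) ≃ₗ[K] (Fin 3 → K)) (L : Submodule K (Fin 3 → K)) : Prop :=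
  ∃ R : Pt K, IsElation f L R

/-- The projectivity induced by `f` stabilises the point set `A`. -/
def Stabilises (f : (Fin 3 → K) ≃ₗ[K] (Fin 3 → K)) (A : Set (Pt K)) : Prop :=
  projMap f '' A = A

/-- `N` lies on every `t`-secant of `A` (i.e. `N` is the `t`-nucleus). -/
def IsNucleus (t : ℕ) (A : Set (Pt K)) (N : Pt K) : Prop :=
  ∀ L : Submodule K (Fin 3 → K), IsLine L → secantCount A L = t → OnLine N L

/-- An elation KM-arc of type `t` with `t`-nucleus `N` and elation line `linf`:
for every `t`-secant `L ≠ linf`, the group of elations with axis `linf` stabilising `A`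
acts transitively on `A ∩ L`. -/
def IsElationKMArc (q t : ℕ) (A : Set (Pt K)) (N : Pt K)
    (linf : Submodule K (Fin 3 → K)) : Prop :=
  IsKMArc q t A ∧ IsLine linf ∧ OnLine N linf ∧ IsNucleus t A N ∧
    ∀ L : Submodule K (Fin 3 → K), IsLine L → secantCount A L = t → L ≠ linf →
      ∀ P ∈ A, OnLine P L → ∀ Q ∈ A, OnLine Q L →
        ∃ f : (Fin 3 → K) ≃ₗ[K] (Fin 3 → K),
          IsElationAxis f linf ∧ Stabilises f A ∧ projMap f P = Q

/-- A translation KM-arc with translation line `l`: the group of elations with axis `l`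
stabilising `A` acts transitively on `A \ l`. -/
def IsTranslationKMArc (A : Set (Pt K)) (l : Submodule K (Fin 3 → K)) : Prop :=
  IsLine l ∧ ∀ P ∈ A, ¬OnLine P l → ∀ Q ∈ A, ¬OnLine Q l →
    ∃ f : (Fin 3 → K) ≃ₗ[K] (Fin 3 → K),
      IsElationAxis f l ∧ Stabilises f A ∧ projMap f P = Q

/-- The line `X = 0` of `PG(2,q)`. -/
def lineX0 (K : Type*) [Field K] : Submodule K (Fin 3 → K) :=
  LinearMap.ker (LinearMap.proj (R := K) (φ := fun _ : Fin 3 => K) 0)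

/-- The line `Y = aX` of `PG(2,q)`. -/
def lineYaX (a : K) : Submodule K (Fin 3 → K) where
  carrier := {v | v 1 = a * v 0}
  add_mem' := by
    intro v w hv hw
    simp only [Set.mem_setOf_eq, Pi.add_apply] at hv hw ⊢
    rw [hv, hw]; ring
  zero_mem' := by simp
  smul_mem' := by
    intro c v hv
    simp only [Set.mem_setOf_eq, Pi.smul_apply, smul_eq_mul] at hv ⊢
    rw [hv]; ring

/-- The point set of the `q/8`-construction (Theorem 4.4 of the paper), built from
`F₂`-independent `a 0, a 1, a 2` and coset representatives `b 0, b 1, b 2`. -/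
def q8Arc (h : ℕ) (a b : Fin 3 → K) : Set (Pt K) :=
  {P | ∃ x : K, (∀ i, Tr h (a i ^ 2 * x) = 0) ∧ P = pt3 0 1 x (by simp)}
    ∪ {P | ∃ l : Fin 3 → K, (∀ i, l i = 0 ∨ l i = 1) ∧ ∃ s : K, (∀ i, Tr h (a i * s) = 0) ∧
        P = pt3 1 (l 0 * a 0 + l 1 * a 1 + l 2 * a 2)
          ((l 0 + l 1 + l 2 + l 1 * l 2) * b 0 + (l 1 + l 2 + l 0 * l 2) * b 1
            + (l 2 + l 0 * l 1) * b 2 + s) (by simp)}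

/-- The point set of the `q/16`-construction (Theorem 5.2 of the paper). -/
def q16Arc (h : ℕ) (a : Fin 4 → K) (α : K) (b : Fin 3 → K) : Set (Pt K) :=
  {P | ∃ x : K, Tr h (a 0 * (a 0 + a 3) * x) = 0 ∧ Tr h (a 1 * (a 1 + a 3) * x) = 0 ∧
      Tr h (a 2 * (a 2 + a 3) * x) = 0 ∧ Tr h (a 3 * α * x) = 1 ∧ P = pt3 0 1 x (by simp)}
    ∪ {P | ∃ l : Fin 4 → K, (∀ i, l i = 0 ∨ l i = 1) ∧ ∃ s : K, (∀ i, Tr h (a i * s) = 0) ∧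
        P = pt3 1 (l 0 * a 0 + l 1 * a 1 + l 2 * a 2 + l 3 * a 3)
          ((l 0 + l 1 + l 2 + l 1 * l 2) * b 0 + (l 1 + l 2 + l 0 * l 2) * b 1
            + (l 2 + l 0 * l 1) * b 2 + s) (by simp)}

/-- The semilinear collineation of `PG(2,q)` sending the point spanned by `v`
to the point spanned by `M (ψ ∘ v)`. -/
def frobMap (ψ : K ≃+* K) (M : (Fin 3 → K) ≃ₗ[K] (Fin 3 → K)) (P : Pt K) : Pt K :=
  Projectivization.mk K (M fun i => ψ (P.rep i)) (by
    rw [LinearEquiv.map_ne_zero_iff]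
    intro h0
    apply P.rep_nonzero
    funext i
    have h2 : P.rep i = 0 := ψ.injective (by rw [map_zero]; exact congrFun h0 i)
    simpa using h2)

/-!
If two arc points with parameters `l ≠ l'` lie on a non-vertical line of slope `m`, then
`w = ∑ i, (l i - l' i) • a i` satisfies `Tr (m w (w + a 3)) = (l - l' + e₃) ⬝ (f l - f l')`.
The left side is additive in `w`. The coset function `f` is chosen so that the right side is `1`
unless `w = a 3` and `f l = f l'`, in which case `m * a 3` is orthogonal to every `a i`. Three
collinear points would therefore give `1 + 1 = 1`, except in this degenerate case. There the
conditions `a i ^ 2 / a 3 ∈ ⟨a⟩` make the form vanish on `⟨a⟩`, so any two of the points differ by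
`a 3` in their first coordinates and again there are at most two. If `(0 : 1 : m)` is itself an arc
point, the form vanishes on `⟨a⟩` as well, and the degenerate case is excluded by
`Tr (a 3 * α * m) = 1`, so there is at most one affine point. A count of points and slopes turns
these upper bounds into the exact secant numbers, and the cosets of `S` provide the shears acting
transitively on the fibres.
-/

open LinearMap (transvection)

section Points

lemma onLine_mk {v : Fin 3 → K} (hv : v ≠ 0) {L : Submodule K (Fin 3 → K)} :
    OnLine (Projectivization.mk K v hv) L ↔ v ∈ L := by
  rw [OnLine, Projectivization.submodule_mk, Submodule.span_singleton_le_iff_mem]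

lemma onLine_pt3 {x y z : K} (hxyz) {L : Submodule K (Fin 3 → K)} :
    OnLine (pt3 x y z hxyz) L ↔ ![x, y, z] ∈ L :=
  onLine_mk _

lemma pt3_one_inj {y z y' z' : K} (hp hp') :
    pt3 1 y z hp = pt3 1 y' z' hp' ↔ y = y' ∧ z = z' := by
  rw [pt3, pt3, Projectivization.mk_eq_mk_iff']
  refine ⟨fun ⟨c, hc⟩ => ?_, fun ⟨hy, hz⟩ => ⟨1, by simp [hy, hz]⟩⟩
  obtain ⟨rfl, rfl, rfl⟩ : c = 1 ∧ c * y' = y ∧ c * z' = z := by simpa using hc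
  simp

lemma pt3_zero_one_inj {x x' : K} (hp hp') : pt3 0 1 x hp = pt3 0 1 x' hp' ↔ x = x' := by
  rw [pt3, pt3, Projectivization.mk_eq_mk_iff']
  refine ⟨fun ⟨c, hc⟩ => ?_, fun hx => ⟨1, by simp [hx]⟩⟩
  obtain ⟨rfl, rfl⟩ : c = 1 ∧ c * x' = x := by simpa using hc
  simp

lemma pt3_zero_ne_pt3_one {x y y' z : K} (hp hp') : pt3 0 x y hp ≠ pt3 1 y' z hp' := by
  intro h
  obtain ⟨c, hc⟩ := (Projectivization.mk_eq_mk_iff' ..).1 h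
  obtain ⟨rfl, rfl, rfl⟩ : c = 0 ∧ c * y' = x ∧ c * z = y := by simpa using hc
  simp at hp

end Points

section Lines

/-- The line `Z = mY + cX` of `PG(2,q)`, whose affine part is the graph of `z = my + c` and whose
point at infinity is `(0 : 1 : m)`. -/
def lineOfSlope (m c : K) : Submodule K (Fin 3 → K) :=
  LinearMap.ker (dotProductEquiv K (Fin 3) ![-c, -m, 1])

lemma mem_lineX0 {v : Fin 3 → K} : v ∈ lineX0 K ↔ v 0 = 0 := Iff.rfl

lemma mem_lineYaX {γ : K} {v : Fin 3 → K} : v ∈ lineYaX γ ↔ v 1 = γ * v 0 := Iff.rfl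

lemma mem_lineOfSlope {m c : K} {v : Fin 3 → K} :
    v ∈ lineOfSlope m c ↔ v 2 = m * v 1 + c * v 0 := by
  rw [lineOfSlope, LinearMap.mem_ker, dotProductEquiv_apply_apply, ← sub_eq_zero (a := v 2)]
  simp only [dotProduct, Fin.sum_univ_three, Matrix.cons_val]
  ring_nf

lemma isLine_ker {f : Module.Dual K (Fin 3 → K)} (hf : f ≠ 0) : IsLine (LinearMap.ker f) := by
  have := Module.Dual.finrank_ker_add_one_of_ne_zero hf
  rw [Module.finrank_fin_fun] at this
  exact Nat.succ_injective this

lemma isLine_lineX0 : IsLine (lineX0 K) :=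
  isLine_ker fun h => by simpa using LinearMap.congr_fun h (Pi.single 0 1)

lemma IsLine.exists_mem_iff_dotProduct {L : Submodule K (Fin 3 → K)} (hL : IsLine L) :
    ∃ w : Fin 3 → K, w ≠ 0 ∧ ∀ v, v ∈ L ↔ w ⬝ᵥ v = 0 := by
  have hlt : L < ⊤ := Submodule.lt_top_of_finrank_lt_finrank (by
    rw [hL, Module.finrank_fin_fun]; norm_num)
  obtain ⟨f, hf, hle⟩ := Submodule.exists_le_ker_of_lt_top L hlt
  have hker : L = LinearMap.ker f :=
    Submodule.eq_of_le_of_finrank_eq hle (hL.trans (isLine_ker hf).symm)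
  obtain ⟨w, rfl⟩ := (dotProductEquiv K (Fin 3)).surjective f
  exact ⟨w, by simpa using hf, fun v => by rw [hker]; rfl⟩

lemma IsLine.eq_lineX0_or_lineYaX_or_lineOfSlope {L : Submodule K (Fin 3 → K)} (hL : IsLine L) :
    L = lineX0 K ∨ (∃ γ, L = lineYaX γ) ∨ ∃ m c, L = lineOfSlope m c := by
  obtain ⟨w, hw, hmem⟩ := hL.exists_mem_iff_dotProduct
  simp only [dotProduct, Fin.sum_univ_three] at hmem
  by_cases h2 : w 2 = 0
  · by_cases h1 : w 1 = 0
    · have h0 : w 0 ≠ 0 := fun h0 => hw (by ext i; fin_cases i <;> assumption)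
      exact .inl (by ext v; simp [hmem, mem_lineX0, h0, h1, h2])
    · refine .inr (.inl ⟨-w 0 / w 1, ?_⟩)
      ext v
      rw [hmem, mem_lineYaX, h2]
      field_simp
      constructor <;> intro h <;> linear_combination h
  · refine .inr (.inr ⟨-w 1 / w 2, -w 0 / w 2, ?_⟩)
    ext v
    rw [hmem, mem_lineOfSlope]
    field_simp
    constructor <;> intro h <;> linear_combination h

end Lines

section Elations

lemma isElation_transvection {f : Module.Dual K (Fin 3 → K)} {v : Fin 3 → K} (hf : f ≠ 0)
    (hfv : f v = 0) {R : Pt K} (hR : OnLine R (LinearMap.ker f)) (hv : v ∈ R.submodule) :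
    IsElation (LinearEquiv.transvection hfv) (LinearMap.ker f) R := by
  refine ⟨isLine_ker hf, hR, fun P hP => ?_, fun M _ hRM P hP => ?_⟩ <;>
    induction P using Projectivization.ind with | h u hu => ?_
  · have hfu : f u = 0 := (onLine_mk hu).1 hP
    simp [projMap, Projectivization.map_mk, transvection.apply, hfu]
  · rw [onLine_mk] at hP
    rw [projMap, Projectivization.map_mk, onLine_mk]
    exact M.add_mem hP (M.smul_mem _ (hRM hv))

/-- The shear `(x, y, z) ↦ (x, y, z + sx)`, an elation with axis `X = 0` and centre
`(0 : 0 : 1)`. -/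
def shear (s : K) : (Fin 3 → K) ≃ₗ[K] (Fin 3 → K) :=
  LinearEquiv.transvection (f := LinearMap.proj 0) (v := s • Pi.single 2 1) (by simp)

lemma isElationAxis_shear (s : K) : IsElationAxis (shear s) (lineX0 K) := by
  refine ⟨Projectivization.mk K (Pi.single 2 1) (by simp), isElation_transvection ?_ _ ?_ ?_⟩
  · exact fun h => by simpa using LinearMap.congr_fun h (Pi.single 0 1)
  · simp [onLine_mk]
  · rw [Projectivization.submodule_mk]
    exact Submodule.smul_mem _ s (Submodule.mem_span_singleton_self _)

lemma projMap_shear_pt3_one (s y z : K) (hp hp') :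
    projMap (shear s) (pt3 1 y z hp) = pt3 1 y (z + s) hp' := by
  rw [projMap, pt3, Projectivization.map_mk, pt3]
  congr 1
  ext i
  fin_cases i <;> simp [shear, transvection.apply]

lemma projMap_shear_pt3_zero (s x y : K) (hp) :
    projMap (shear s) (pt3 0 x y hp) = pt3 0 x y hp := by
  rw [projMap, pt3, Projectivization.map_mk]
  simp [shear, transvection.apply]

end Elations

section AffineData

/-- The point set of `PG(2,q)` with affine points `(1 : y : z)`, `(y, z) ∈ T`, and with points
`(0 : 1 : x)`, `x ∈ D`, on the line `X = 0`. -/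
def arcOf (T : Set (K × K)) (D : Set K) : Set (Pt K) :=
  (fun x => pt3 0 1 x (by simp)) '' D ∪ (fun p : K × K => pt3 1 p.1 p.2 (by simp)) '' T

/-- The abscissae of the points of `T` on the affine line `z = my + c`. -/
def affineSection (T : Set (K × K)) (m c : K) : Set K := {y | (y, m * y + c) ∈ T}

/-- The slope of the affine line joining `p₀` to `p`; it is `0` when they lie on a vertical
line. -/
def slopeFrom (p₀ p : K × K) : K := (p.2 - p₀.2) / (p.1 - p₀.1)

/-- The affine conditions which make `arcOf T D` a KM-arc of type `t` with nucleus `(0 : 0 : 1)`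
and `X = 0` as a `t`-secant. Only upper bounds are imposed on the non-vertical lines; counting
turns them into exact values. -/
structure IsAffineKMArc (t : ℕ) (T : Set (K × K)) (D : Set K) : Prop where
  ncard_points : T.ncard = Nat.card K
  ncard_slopes : D.ncard = t
  ncard_fiber : ∀ γ z, (γ, z) ∈ T → {z' | (γ, z') ∈ T}.ncard = t
  ncard_section_le_two : ∀ m c, (affineSection T m c).ncard ≤ 2
  section_subsingleton : ∀ m ∈ D, ∀ c, (affineSection T m c).Subsingleton

/-- Every nonempty fibre of `T` over a first coordinate is a coset of `S`. -/
def HasCosetFibers (S : AddSubgroup K) (T : Set (K × K)) : Prop :=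
  ∀ γ z, (γ, z) ∈ T → ∀ z', (γ, z') ∈ T ↔ z' - z ∈ S

variable {T : Set (K × K)} {D : Set K} {S : AddSubgroup K} {t : ℕ}

lemma mem_affineSection {m c y z : K} (hz : z = m * y + c) :
    y ∈ affineSection T m c ↔ (y, z) ∈ T := by
  rw [hz]; rfl

lemma fst_mem_affineSection {p : K × K} (hp : p ∈ T) (m : K) :
    p.1 ∈ affineSection T m (p.2 - m * p.1) :=
  (mem_affineSection (by ring)).2 hp

lemma fst_mem_affineSection_slopeFrom {p₀ p : K × K} (hp : p ∈ T) (hne : p.1 ≠ p₀.1) :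
    p.1 ∈ affineSection T (slopeFrom p₀ p) (p₀.2 - slopeFrom p₀ p * p₀.1) := by
  have hsub := sub_ne_zero.2 hne
  refine (mem_affineSection ?_).2 hp
  rw [slopeFrom]
  field_simp
  ring

lemma pt3_one_mem_arcOf {y z : K} (hp) : pt3 1 y z hp ∈ arcOf T D ↔ (y, z) ∈ T := by
  simp [arcOf, pt3_one_inj, pt3_zero_ne_pt3_one]

lemma HasCosetFibers.fiber_eq (hS : HasCosetFibers S T) {γ z : K} (hz : (γ, z) ∈ T) :
    {z' | (γ, z') ∈ T} = (z + ·) '' (S : Set K) := by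
  ext z'
  simp [hS γ z hz, sub_eq_neg_add]

lemma HasCosetFibers.fiber_eq_empty_or_coset (hS : HasCosetFibers S T) (γ : K) :
    {z | (γ, z) ∈ T} = ∅ ∨ ∃ β, {z | (γ, z) ∈ T} = (β + ·) '' (S : Set K) :=
  (Set.eq_empty_or_nonempty _).imp_right fun ⟨z, hz⟩ => ⟨z, hS.fiber_eq hz⟩

lemma HasCosetFibers.ncard_fiber (hS : HasCosetFibers S T) {γ z : K} (hz : (γ, z) ∈ T) :
    {z' | (γ, z') ∈ T}.ncard = (S : Set K).ncard := by
  rw [hS.fiber_eq hz, Set.ncard_image_of_injective _ (add_right_injective z)]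

end AffineData

section SecantCounts

variable [Finite K] {T : Set (K × K)} {D : Set K}

lemma ncard_arcOf (T : Set (K × K)) (D : Set K) : (arcOf T D).ncard = D.ncard + T.ncard := by
  rw [arcOf, Set.ncard_union_eq, Set.ncard_image_of_injective, Set.ncard_image_of_injective]
  · exact fun p p' h => Prod.ext_iff.2 ((pt3_one_inj _ _).1 h)
  · exact fun x x' h => (pt3_zero_one_inj _ _).1 h
  · rw [Set.disjoint_left]
    rintro _ ⟨x, -, rfl⟩ ⟨p, -, hp⟩
    exact pt3_zero_ne_pt3_one _ _ hp.symm

lemma secantCount_arcOf (T : Set (K × K)) (D : Set K) (L : Submodule K (Fin 3 → K)) :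
    secantCount (arcOf T D) L =
      {x ∈ D | ![0, 1, x] ∈ L}.ncard + {p ∈ T | ![1, p.1, p.2] ∈ L}.ncard := by
  rw [← ncard_arcOf, secantCount]
  congr 1
  ext P
  constructor
  · rintro ⟨⟨x, hx, rfl⟩ | ⟨p, hp, rfl⟩, hL⟩
    · exact .inl ⟨x, ⟨hx, (onLine_pt3 _).1 hL⟩, rfl⟩
    · exact .inr ⟨p, ⟨hp, (onLine_pt3 _).1 hL⟩, rfl⟩
  · rintro (⟨x, ⟨hx, hL⟩, rfl⟩ | ⟨p, ⟨hp, hL⟩, rfl⟩)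
    · exact ⟨.inl ⟨x, hx, rfl⟩, (onLine_pt3 _).2 hL⟩
    · exact ⟨.inr ⟨p, hp, rfl⟩, (onLine_pt3 _).2 hL⟩

lemma secantCount_arcOf_lineX0 (T : Set (K × K)) (D : Set K) :
    secantCount (arcOf T D) (lineX0 K) = D.ncard := by
  simp [secantCount_arcOf, mem_lineX0]

lemma secantCount_arcOf_lineYaX (T : Set (K × K)) (D : Set K) (γ : K) :
    secantCount (arcOf T D) (lineYaX γ) = {z | (γ, z) ∈ T}.ncard := by
  have hfiber : {p ∈ T | p.1 = γ} = Prod.mk γ '' {z | (γ, z) ∈ T} := by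
    ext ⟨y, z⟩
    simp only [Set.mem_ofPred_eq, Set.mem_image, Prod.mk.injEq]
    grind
  simp [secantCount_arcOf, mem_lineYaX, hfiber,
    Set.ncard_image_of_injective _ (Prod.mk_right_injective γ)]

lemma secantCount_arcOf_lineOfSlope (T : Set (K × K)) (D : Set K) (m c : K) :
    secantCount (arcOf T D) (lineOfSlope m c) =
      (D ∩ {m}).ncard + (affineSection T m c).ncard := by
  have hsection : {p ∈ T | p.2 = m * p.1 + c} =
      (fun y => (y, m * y + c)) '' affineSection T m c := by
    ext ⟨y, z⟩
    simp only [Set.mem_ofPred_eq, Set.mem_image, Prod.mk.injEq, affineSection]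
    grind
  have hslope : {x ∈ D | x = m} = D ∩ {m} := rfl
  simp [secantCount_arcOf, mem_lineOfSlope, hsection, hslope,
    Set.ncard_image_of_injective _ fun y y' (h : (y, m * y + c) = (y', m * y' + c)) =>
      congrArg Prod.fst h]

end SecantCounts

namespace IsAffineKMArc

variable [Finite K] {t : ℕ} {T : Set (K × K)} {D : Set K}

lemma ncard_section_eq_one (h : IsAffineKMArc t T D) {m : K} (hm : m ∈ D) (c : K) :
    (affineSection T m c).ncard = 1 := by
  have hinj : Set.InjOn (fun p : K × K => p.2 - m * p.1) T := by
    rintro ⟨y, z⟩ hp ⟨y', z'⟩ hp' hpp'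
    obtain rfl : y = y' := h.section_subsingleton m hm (z - m * y)
      ((mem_affineSection (by ring)).2 hp)
      ((mem_affineSection (by linear_combination -hpp')).2 hp')
    simpa using hpp'
  have himage : (fun p : K × K => p.2 - m * p.1) '' T = Set.univ :=
    Set.eq_of_subset_of_ncard_le (Set.subset_univ _) (by
      rw [hinj.ncard_image, h.ncard_points, Set.ncard_univ])
  obtain ⟨⟨y, z⟩, hp, hc⟩ := himage.ge (Set.mem_univ c)
  refine Set.ncard_eq_one.2 ⟨y, (h.section_subsingleton m hm c).eq_singleton_of_mem ?_⟩
  exact (mem_affineSection (by linear_combination hc)).2 hp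

lemma ncard_off_fiber (h : IsAffineKMArc t T D) {p₀ : K × K} (hp₀ : p₀ ∈ T) :
    {p ∈ T | p.1 ≠ p₀.1}.ncard = Dᶜ.ncard := by
  have hsdiff : {p ∈ T | p.1 ≠ p₀.1} = T \ Prod.mk p₀.1 '' {z | (p₀.1, z) ∈ T} := by
    ext ⟨y, z⟩
    simp only [Set.mem_ofPred_eq, Set.mem_sdiff, Set.mem_image, Prod.mk.injEq]
    grind
  rw [hsdiff, Set.ncard_sdiff (by rintro _ ⟨z, hz, rfl⟩; exact hz),
    Set.ncard_image_of_injective _ (Prod.mk_right_injective p₀.1), h.ncard_fiber _ p₀.2 hp₀,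
    h.ncard_points, Set.ncard_compl, h.ncard_slopes]

lemma injOn_slopeFrom (h : IsAffineKMArc t T D) {p₀ : K × K} (hp₀ : p₀ ∈ T) :
    Set.InjOn (slopeFrom p₀) {p ∈ T | p.1 ≠ p₀.1} := by
  rintro p ⟨hp, hpne⟩ p' ⟨hp', hpne'⟩ hslope
  have hfst : p.1 = p'.1 := by
    by_contra hfst
    have hmem' := fst_mem_affineSection_slopeFrom hp' hpne'
    rw [← hslope] at hmem'
    exact (h.ncard_section_le_two _ _).not_gt ((Set.two_lt_ncard (Set.toFinite _)).2
      ⟨_, fst_mem_affineSection_slopeFrom hp hpne, _, hmem', _,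
        fst_mem_affineSection hp₀ _, hfst, hpne, hpne'⟩)
  refine Prod.ext hfst ?_
  have hne := sub_ne_zero.2 hpne'
  simp only [slopeFrom, hfst] at hslope
  field_simp at hslope
  linear_combination hslope

lemma exists_ne_mem_section (h : IsAffineKMArc t T D) {m c y₀ : K} (hm : m ∉ D)
    (hy₀ : y₀ ∈ affineSection T m c) : ∃ y ≠ y₀, y ∈ affineSection T m c := by
  set p₀ : K × K := (y₀, m * y₀ + c)
  have hmaps : Set.MapsTo (slopeFrom p₀) {p ∈ T | p.1 ≠ p₀.1} Dᶜ := fun p ⟨hp, hne⟩ hD =>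
    hne (h.section_subsingleton _ hD _ (fst_mem_affineSection_slopeFrom hp hne)
      (fst_mem_affineSection hy₀ _))
  have himage : slopeFrom p₀ '' {p ∈ T | p.1 ≠ p₀.1} = Dᶜ :=
    Set.eq_of_subset_of_ncard_le hmaps.image_subset (by
      rw [(h.injOn_slopeFrom hy₀).ncard_image, h.ncard_off_fiber hy₀])
  obtain ⟨p, ⟨hp, hne⟩, hslope⟩ := himage.ge hm
  have hy := fst_mem_affineSection_slopeFrom hp hne
  rw [hslope, add_sub_cancel_left] at hy
  exact ⟨p.1, hne, hy⟩

lemma ncard_section_eq_zero_or_two (h : IsAffineKMArc t T D) {m : K} (hm : m ∉ D) (c : K) :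
    (affineSection T m c).ncard = 0 ∨ (affineSection T m c).ncard = 2 := by
  rcases (affineSection T m c).eq_empty_or_nonempty with hempty | ⟨y₀, hy₀⟩
  · simp [hempty]
  · obtain ⟨y, hne, hy⟩ := h.exists_ne_mem_section hm hy₀
    exact .inr (le_antisymm (h.ncard_section_le_two m c)
      ((Set.one_lt_ncard (Set.toFinite _)).2 ⟨y, hy, y₀, hy₀, hne⟩))

lemma secantCount_lineOfSlope (h : IsAffineKMArc t T D) (m c : K) :
    secantCount (arcOf T D) (lineOfSlope m c) = 0 ∨
      secantCount (arcOf T D) (lineOfSlope m c) = 2 := by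
  rw [secantCount_arcOf_lineOfSlope]
  by_cases hm : m ∈ D
  · simp [Set.inter_eq_right.2 (Set.singleton_subset_iff.2 hm), h.ncard_section_eq_one hm]
  · simpa [Set.inter_singleton_eq_empty.2 hm] using h.ncard_section_eq_zero_or_two hm c

lemma secantCount_lineYaX (h : IsAffineKMArc t T D) (γ : K) :
    secantCount (arcOf T D) (lineYaX γ) = 0 ∨ secantCount (arcOf T D) (lineYaX γ) = t := by
  rw [secantCount_arcOf_lineYaX]
  rcases {z | (γ, z) ∈ T}.eq_empty_or_nonempty with hempty | ⟨z, hz⟩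
  · simp [hempty]
  · exact .inr (h.ncard_fiber γ z hz)

theorem isKMArc_arcOf (h : IsAffineKMArc t T D) : IsKMArc (Nat.card K) t (arcOf T D) := by
  refine ⟨by rw [ncard_arcOf, h.ncard_points, h.ncard_slopes, add_comm], fun L hL => ?_⟩
  obtain rfl | ⟨γ, rfl⟩ | ⟨m, c, rfl⟩ := hL.eq_lineX0_or_lineYaX_or_lineOfSlope
  · exact .inr (.inr (by rw [secantCount_arcOf_lineX0, h.ncard_slopes]))
  · exact (h.secantCount_lineYaX γ).imp_right .inr
  · exact (h.secantCount_lineOfSlope m c).imp_right .inl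

lemma eq_lineX0_or_lineYaX (h : IsAffineKMArc t T D) (ht : 2 < t)
    {L : Submodule K (Fin 3 → K)} (hL : IsLine L) (hLt : secantCount (arcOf T D) L = t) :
    L = lineX0 K ∨ ∃ γ, L = lineYaX γ := by
  obtain hL | hL | ⟨m, c, rfl⟩ := hL.eq_lineX0_or_lineYaX_or_lineOfSlope
  · exact .inl hL
  · exact .inr hL
  · rcases h.secantCount_lineOfSlope m c with h0 | h2 <;> omega

theorem isNucleus_arcOf (h : IsAffineKMArc t T D) (ht : 2 < t) :
    IsNucleus t (arcOf T D) (pt3 (0 : K) 0 1 (by simp)) := by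
  intro L hL hLt
  rw [onLine_pt3]
  obtain rfl | ⟨γ, rfl⟩ := h.eq_lineX0_or_lineYaX ht hL hLt <;>
    simp [mem_lineX0, mem_lineYaX]

end IsAffineKMArc

section ElationArcs

variable {T : Set (K × K)} {D : Set K} {S : AddSubgroup K}

lemma projMap_shear_mem_arcOf (hS : HasCosetFibers S T) {s : K} (hs : s ∈ S) {P : Pt K}
    (hP : P ∈ arcOf T D) : projMap (shear s) P ∈ arcOf T D := by
  obtain ⟨x, hx, rfl⟩ | ⟨⟨y, z⟩, hp, rfl⟩ := hP
  · exact .inl ⟨x, hx, (projMap_shear_pt3_zero ..).symm⟩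
  · rw [projMap_shear_pt3_one s y z _ (by simp), pt3_one_mem_arcOf, hS y z hp]
    simpa using hs

lemma stabilises_shear_arcOf (hS : HasCosetFibers S T) {s : K} (hs : s ∈ S) :
    Stabilises (shear s) (arcOf T D) := by
  refine Set.Subset.antisymm (Set.image_subset_iff.2 fun P => projMap_shear_mem_arcOf hS hs) ?_
  intro P hP
  refine ⟨projMap (shear (-s)) P, projMap_shear_mem_arcOf hS (neg_mem hs) hP, ?_⟩
  obtain ⟨x, -, rfl⟩ | ⟨⟨y, z⟩, -, rfl⟩ := hP
  · simp only [projMap_shear_pt3_zero]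
  · rw [projMap_shear_pt3_one (-s) y z _ (by simp), projMap_shear_pt3_one s y _ _ (by simp)]
    simp only [neg_add_cancel_right]

theorem isElationKMArc_arcOf [Finite K] {t : ℕ} (h : IsAffineKMArc t T D)
    (hS : HasCosetFibers S T) (ht : 2 < t) :
    IsElationKMArc (Nat.card K) t (arcOf T D) (pt3 (0 : K) 0 1 (by simp)) (lineX0 K) := by
  refine ⟨h.isKMArc_arcOf, isLine_lineX0, by simp [onLine_pt3, mem_lineX0],
    h.isNucleus_arcOf ht, fun L hL hLt hne => ?_⟩
  obtain ⟨γ, rfl⟩ := (h.eq_lineX0_or_lineYaX ht hL hLt).resolve_left hne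
  have hpoint : ∀ P ∈ arcOf T D, OnLine P (lineYaX γ) →
      ∃ z, (γ, z) ∈ T ∧ P = pt3 1 γ z (by simp) := by
    rintro _ (⟨x, -, rfl⟩ | ⟨⟨y, z⟩, hp, rfl⟩) hP <;>
      rw [onLine_pt3, mem_lineYaX] at hP
    · simp at hP
    · obtain rfl : y = γ := by simpa using hP
      exact ⟨z, hp, rfl⟩
  intro P hP hPL Q hQ hQL
  obtain ⟨z, hz, rfl⟩ := hpoint P hP hPL
  obtain ⟨z', hz', rfl⟩ := hpoint Q hQ hQL
  refine ⟨shear (z' - z), isElationAxis_shear _,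
    stabilises_shear_arcOf hS ((hS γ z hz z').1 hz'), ?_⟩
  rw [projMap_shear_pt3_one _ _ _ _ (by simp)]
  simp only [add_sub_cancel]

end ElationArcs

section DualCoords

variable {F ι : Type*} [Field F] [Algebra F K]

/-- The `F`-linear coordinates `x ↦ (τ (a i * x))ᵢ` on `K`: the pairings of `x` with the family `a`
under the bilinear form `(y, x) ↦ τ (y * x)`. -/
def dualCoords (τ : Module.Dual F K) (a : ι → K) : K →ₗ[F] ι → F :=
  LinearMap.pi fun i => τ ∘ₗ LinearMap.mulLeft F (a i)

lemma dualCoords_apply (τ : Module.Dual F K) (a : ι → K) (x : K) (i : ι) :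
    dualCoords τ a x i = τ (a i * x) := rfl

lemma map_mul_eq_zero_of_mem_span {τ : Module.Dual F K} {a : ι → K} {x v : K}
    (hx : dualCoords τ a x = 0) (hv : v ∈ Submodule.span F (Set.range a)) : τ (v * x) = 0 := by
  have hspan : Submodule.span F (Set.range a) ≤
      LinearMap.ker (τ ∘ₗ LinearMap.mulRight F x) := by
    rw [Submodule.span_le]
    rintro _ ⟨i, rfl⟩
    exact congrFun hx i
  exact hspan hv

lemma map_linearCombination_mul [Fintype ι] (τ : Module.Dual F K) (a : ι → K) (l : ι → F) (x : K) :
    τ (Fintype.linearCombination F a l * x) = l ⬝ᵥ dualCoords τ a x := by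
  simp [Fintype.linearCombination_apply, dotProduct, dualCoords_apply, Finset.sum_mul]

lemma dualCoords_surjective [Finite ι] {τ : Module.Dual F K} (hτ : τ ≠ 0) {a : ι → K}
    (ha : LinearIndependent F a) : Function.Surjective (dualCoords τ a) := by
  cases nonempty_fintype ι
  rw [← LinearMap.range_eq_top]
  by_contra hne
  obtain ⟨g, hg, hle⟩ := Submodule.exists_le_ker_of_lt_top _ (Ne.lt_top hne)
  obtain ⟨l, rfl⟩ := (dotProductEquiv F ι).surjective g
  set y := Fintype.linearCombination F a l with hy
  have hτy : ∀ x, τ (y * x) = 0 := fun x => by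
    rw [map_linearCombination_mul]
    exact hle ⟨x, rfl⟩
  have hy0 : y = 0 := by
    by_contra hy0
    exact hτ (LinearMap.ext fun x => by simpa [mul_div_cancel₀, hy0] using hτy (x / y))
  have hl : l = 0 := ha.fintypeLinearCombination_injective (by rw [← hy, hy0, map_zero])
  exact hg (by rw [hl, map_zero])

end DualCoords

lemma ncard_fiber_of_surjective {R V W : Type*} [Ring R] [AddCommGroup V] [Module R V]
    [AddCommGroup W] [Module R W] [Finite V] {φ : V →ₗ[R] W} (hφ : Function.Surjective φ) (c : W) :
    {x | φ x = c}.ncard = Nat.card V / Nat.card W := by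
  obtain ⟨x₀, rfl⟩ := hφ c
  have hcoset : {x | φ x = φ x₀} = (x₀ + ·) '' (LinearMap.ker φ : Set V) := by
    ext x
    simp [neg_add_eq_sub, sub_eq_zero]
  have := Finite.of_surjective φ hφ
  rw [hcoset, Set.ncard_image_of_injective _ (add_right_injective x₀),
    Submodule.card_eq_card_quotient_mul_card (LinearMap.ker φ),
    Nat.card_congr (φ.quotKerEquivOfSurjective hφ).toEquiv,
    Nat.mul_div_cancel _ Nat.card_pos]
  rfl

section CosetGraph

variable {F ι : Type*} [Field F] [Algebra F K] [Fintype ι]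

/-- The affine point set which lies, over each `∑ i, l i • a i`, in the coset
`{z | dualCoords τ a z = f l}` of the annihilator of `a`. -/
def cosetGraph (τ : Module.Dual F K) (a : ι → K) (f : (ι → F) → ι → F) : Set (K × K) :=
  {p | ∃ l, p.1 = Fintype.linearCombination F a l ∧ dualCoords τ a p.2 = f l}

variable {τ : Module.Dual F K} {a : ι → K}

lemma mem_span_of_mem_section {f : (ι → F) → ι → F} {m c y : K}
    (hy : y ∈ affineSection (cosetGraph τ a f) m c) : y ∈ Submodule.span F (Set.range a) := by
  obtain ⟨l, rfl : y = _, -⟩ := hy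
  rw [← Fintype.range_linearCombination]
  exact ⟨l, rfl⟩

lemma hasCosetFibers_cosetGraph (ha : LinearIndependent F a) (f : (ι → F) → ι → F) :
    HasCosetFibers (LinearMap.ker (dualCoords τ a)).toAddSubgroup (cosetGraph τ a f) := by
  rintro _ z ⟨l, rfl, hz⟩ z'
  rw [Submodule.mem_toAddSubgroup, LinearMap.mem_ker, map_sub, sub_eq_zero, hz]
  refine ⟨fun ⟨l', hl', hz'⟩ => ?_, fun hz' => ⟨l, rfl, hz'⟩⟩
  rw [hz', ha.fintypeLinearCombination_injective hl']

lemma ncard_cosetGraph (hτ : τ ≠ 0) (ha : LinearIndependent F a) (f : (ι → F) → ι → F) :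
    (cosetGraph τ a f).ncard = Nat.card K := by
  obtain ⟨g, hg⟩ := (dualCoords_surjective hτ ha).hasRightInverse
  let φ := dualCoords τ a
  let e : K → K × K := fun x => (Fintype.linearCombination F a (φ x), x + g (f (φ x) - φ x))
  have he : Function.Injective e := fun x x' hxx' => by
    obtain ⟨hfst, hsnd⟩ := Prod.ext_iff.1 hxx'
    have hφ : φ x = φ x' := ha.fintypeLinearCombination_injective hfst
    simpa [e, hφ] using hsnd
  have hrange : cosetGraph τ a f = Set.range e := by
    ext ⟨y, z⟩
    constructor
    · rintro ⟨l, rfl, hz⟩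
      have hl : φ (z - g (f l - l)) = l := by simp only [φ, map_sub, hg _]; rw [hz]; abel
      exact ⟨z - g (f l - l), by simp [e, hl]⟩
    · rintro ⟨x, hx⟩
      obtain ⟨rfl, rfl⟩ := Prod.ext_iff.1 hx
      exact ⟨φ x, rfl, by simp only [φ, e, map_add, hg _]; abel⟩
  rw [hrange, ← Set.image_univ, Set.ncard_image_of_injective _ he, Set.ncard_univ]

end CosetGraph

section CharTwo

variable {ι : Type*} [Algebra (ZMod 2) K]

variable (K) in
lemma two_eq_zero_of_algebra_zmod_two : (2 : K) = 0 := by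
  rw [← map_ofNat (algebraMap (ZMod 2) K) 2, show (OfNat.ofNat 2 : ZMod 2) = 0 from rfl, map_zero]

/-- The map `w ↦ τ (m w (w + d))`; it is additive because the characteristic is two. -/
def artinSchreierForm (τ : Module.Dual (ZMod 2) K) (m d : K) : Module.Dual (ZMod 2) K :=
  AddMonoidHom.toZModLinearMap 2 <| AddMonoidHom.mk' (fun w => τ (m * (w * (w + d)))) fun v w => by
    rw [← map_add]
    congr 1
    linear_combination m * v * w * two_eq_zero_of_algebra_zmod_two K

lemma artinSchreierForm_apply (τ : Module.Dual (ZMod 2) K) (m d w : K) :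
    artinSchreierForm τ m d w = τ (m * (w * (w + d))) := rfl

lemma artinSchreierForm_eq_zero_of_mem_span {τ : Module.Dual (ZMod 2) K} {a : ι → K} {m d v : K}
    (h : ∀ i, artinSchreierForm τ m d (a i) = 0)
    (hv : v ∈ Submodule.span (ZMod 2) (Set.range a)) : artinSchreierForm τ m d v = 0 := by
  refine (Submodule.span_le (p := LinearMap.ker (artinSchreierForm τ m d))).2 ?_ hv
  rintro _ ⟨i, rfl⟩
  exact h i

lemma artinSchreierForm_eq_zero_of_dualCoords_eq_zero {τ : Module.Dual (ZMod 2) K}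
    {a : ι → K} {m : K} {k : ι} (hak : a k ≠ 0)
    (hsq : ∀ i, a i ^ 2 / a k ∈ Submodule.span (ZMod 2) (Set.range a))
    (hm : dualCoords τ a (m * a k) = 0) (i : ι) : artinSchreierForm τ m (a k) (a i) = 0 := by
  have hmul : m * (a i * (a i + a k)) = a i ^ 2 / a k * (m * a k) + a i * (m * a k) := by
    field_simp
  rw [artinSchreierForm_apply, hmul, map_add, map_mul_eq_zero_of_mem_span hm (hsq i), zero_add]
  exact congrFun hm i

variable [DecidableEq ι]

/-- The family `a i * (a i + a k)`, `i ≠ k`, completed at `k` by `a k * α`. -/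
def slopeFamily (a : ι → K) (k : ι) (α : K) : ι → K :=
  Function.update (fun i => a i * (a i + a k)) k (a k * α)

/-- The slopes `x` of the arc points `(0 : 1 : x)`: those orthogonal to `a i * (a i + a k)` for
`i ≠ k` and not to `a k * α`. -/
def slopeSet (τ : Module.Dual (ZMod 2) K) (a : ι → K) (k : ι) (α : K) : Set K :=
  {x | dualCoords τ (slopeFamily a k α) x = Pi.single k 1}

/-- The property of the coset function `f` which bounds the non-vertical secants of
`cosetGraph τ a f`. If two of its points with parameters `l ≠ l'` span a line of slope `m` and have
first coordinates differing by `w`, then the scalar product is the value of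
`artinSchreierForm τ m (a k)` at `w`. -/
def IsAdmissible [Fintype ι] (k : ι) (f : (ι → ZMod 2) → ι → ZMod 2) : Prop :=
  ∀ l l', (l - l' + Pi.single k 1) ⬝ᵥ (f l - f l') = 1 ∨ ((∀ i ≠ k, l i = l' i) ∧ f l = f l')

variable {τ : Module.Dual (ZMod 2) K} {a : ι → K} {k : ι} {α m c : K}

lemma map_mul_eq_one_of_mem_slopeSet (hm : m ∈ slopeSet τ a k α) : τ (α * (m * a k)) = 1 := by
  have hk : dualCoords τ (slopeFamily a k α) m k = 1 := by rw [hm]; simp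
  rw [dualCoords_apply, slopeFamily, Function.update_self] at hk
  rw [← hk]
  congr 1
  ring

lemma artinSchreierForm_eq_zero_of_mem_slopeSet (hm : m ∈ slopeSet τ a k α) (i : ι) :
    artinSchreierForm τ m (a k) (a i) = 0 := by
  rw [artinSchreierForm_apply]
  rcases eq_or_ne i k with rfl | hik
  · rw [show m * (a i * (a i + a i)) = 0 by
      linear_combination m * a i ^ 2 * two_eq_zero_of_algebra_zmod_two K, map_zero]
  · have hi : dualCoords τ (slopeFamily a k α) m i = 0 := by rw [hm]; simp [hik]
    rwa [dualCoords_apply, slopeFamily, Function.update_of_ne hik, mul_comm] at hi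

variable [Fintype ι] {f : (ι → ZMod 2) → ι → ZMod 2}

lemma artinSchreierForm_linearCombination (l : ι → ZMod 2) :
    artinSchreierForm τ m (a k) (Fintype.linearCombination (ZMod 2) a l) =
      (l + Pi.single k 1) ⬝ᵥ dualCoords τ a (m * Fintype.linearCombination (ZMod 2) a l) := by
  rw [← map_linearCombination_mul, artinSchreierForm_apply, map_add,
    Fintype.linearCombination_apply_single, one_smul]
  congr 1
  ring

lemma IsAdmissible.artinSchreierForm_sub_eq_one_or (hf : IsAdmissible k f) {y y' : K}
    (hy : y ∈ affineSection (cosetGraph τ a f) m c)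
    (hy' : y' ∈ affineSection (cosetGraph τ a f) m c) (hne : y ≠ y') :
    artinSchreierForm τ m (a k) (y - y') = 1 ∨
      y - y' = a k ∧ dualCoords τ a (m * a k) = 0 := by
  obtain ⟨l, rfl : y = _, hl⟩ := hy
  obtain ⟨l', rfl : y' = _, hl'⟩ := hy'
  have hcoords : dualCoords τ a (m * Fintype.linearCombination (ZMod 2) a (l - l')) =
      f l - f l' := by
    rw [← hl, ← hl', ← map_sub, map_sub (Fintype.linearCombination (ZMod 2) a)]
    congr 1
    ring
  rw [← map_sub]
  rcases hf l l' with hone | ⟨hoff, heq⟩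
  · left
    rw [artinSchreierForm_linearCombination, hcoords, hone]
  · right
    have hsingle : l - l' = Pi.single k 1 := by
      have hlk : l k - l' k ≠ 0 := fun hlk => hne (congrArg _ (funext fun i => by
        by_cases hik : i = k
        · rw [hik, sub_eq_zero.1 hlk]
        · exact hoff i hik))
      ext i
      by_cases hik : i = k
      · subst hik; simpa using (by decide : ∀ x : ZMod 2, x ≠ 0 → x = 1) _ hlk
      · simp [hik, hoff i hik]
    have hak : Fintype.linearCombination (ZMod 2) a (l - l') = a k := by simp [hsingle]
    exact ⟨hak, by rw [← hak, hcoords, heq, sub_self]⟩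

lemma IsAdmissible.section_subsingleton (hf : IsAdmissible k f)
    (hα : α ∈ Submodule.span (ZMod 2) (Set.range a)) (hm : m ∈ slopeSet τ a k α) :
    (affineSection (cosetGraph τ a f) m c).Subsingleton := by
  intro y hy y' hy'
  by_contra hne
  rcases hf.artinSchreierForm_sub_eq_one_or hy hy' hne with hone | ⟨-, hmk⟩
  · have hzero : artinSchreierForm τ m (a k) (y - y') = 0 :=
      artinSchreierForm_eq_zero_of_mem_span (artinSchreierForm_eq_zero_of_mem_slopeSet hm)
        (sub_mem (mem_span_of_mem_section hy) (mem_span_of_mem_section hy'))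
    exact zero_ne_one (hzero.symm.trans hone)
  · exact zero_ne_one
      ((map_mul_eq_zero_of_mem_span hmk hα).symm.trans (map_mul_eq_one_of_mem_slopeSet hm))

lemma IsAdmissible.ncard_section_le_two [Finite K] (hf : IsAdmissible k f) (hak : a k ≠ 0)
    (hsq : ∀ i, a i ^ 2 / a k ∈ Submodule.span (ZMod 2) (Set.range a)) (m c : K) :
    (affineSection (cosetGraph τ a f) m c).ncard ≤ 2 := by
  by_contra! hlt
  obtain ⟨y₁, h₁, y₂, h₂, y₃, h₃, h₁₂, h₁₃, h₂₃⟩ := (Set.two_lt_ncard (Set.toFinite _)).1 hlt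
  by_cases hmk : dualCoords τ a (m * a k) = 0
  · have hsub : ∀ {y y'}, y ∈ affineSection (cosetGraph τ a f) m c →
        y' ∈ affineSection (cosetGraph τ a f) m c → y ≠ y' → y - y' = a k := by
      intro y y' hy hy' hne
      have hzero : artinSchreierForm τ m (a k) (y - y') = 0 :=
        artinSchreierForm_eq_zero_of_mem_span
          (artinSchreierForm_eq_zero_of_dualCoords_eq_zero hak hsq hmk)
          (sub_mem (mem_span_of_mem_section hy) (mem_span_of_mem_section hy'))
      refine ((hf.artinSchreierForm_sub_eq_one_or hy hy' hne).resolve_left ?_).1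
      exact fun hone => zero_ne_one (hzero.symm.trans hone)
    exact h₂₃ (sub_right_injective ((hsub h₁ h₂ h₁₂).trans (hsub h₁ h₃ h₁₃).symm))
  · have hone : ∀ {y y'}, y ∈ affineSection (cosetGraph τ a f) m c →
        y' ∈ affineSection (cosetGraph τ a f) m c → y ≠ y' →
          artinSchreierForm τ m (a k) (y - y') = 1 := fun hy hy' hne =>
      (hf.artinSchreierForm_sub_eq_one_or hy hy' hne).resolve_right fun h => hmk h.2
    have hadd := map_add (artinSchreierForm τ m (a k)) (y₁ - y₂) (y₂ - y₃)
    rw [sub_add_sub_cancel, hone h₁ h₃ h₁₃, hone h₁ h₂ h₁₂, hone h₂ h₃ h₂₃] at hadd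
    exact absurd hadd (by decide)

theorem isAffineKMArc_cosetGraph [Finite K] (hτ : τ ≠ 0) (ha : LinearIndependent (ZMod 2) a)
    (hsq : ∀ i, a i ^ 2 / a k ∈ Submodule.span (ZMod 2) (Set.range a))
    (hα : α ∈ Submodule.span (ZMod 2) (Set.range a))
    (hu : LinearIndependent (ZMod 2) (slopeFamily a k α)) (hf : IsAdmissible k f) :
    IsAffineKMArc (Nat.card K / 2 ^ Fintype.card ι) (cosetGraph τ a f) (slopeSet τ a k α) where
  ncard_points := ncard_cosetGraph hτ ha f
  ncard_slopes :=
    (ncard_fiber_of_surjective (dualCoords_surjective hτ hu) _).trans (by simp)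
  ncard_fiber γ z hz := by
    rw [(hasCosetFibers_cosetGraph ha f).ncard_fiber hz]
    exact (ncard_fiber_of_surjective (dualCoords_surjective hτ ha) 0).trans (by simp)
  ncard_section_le_two := hf.ncard_section_le_two (ha.ne_zero k) hsq
  section_subsingleton _ hm _ := hf.section_subsingleton hα hm

end CharTwo

section PrimeField

variable [Algebra (ZMod 2) K]

lemma forall_eq_zero_or_one_iff {ι : Type*} {c : ι → K} :
    (∀ i, c i = 0 ∨ c i = 1) ↔ ∃ l : ι → ZMod 2, c = fun i => algebraMap (ZMod 2) K (l i) := by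
  constructor
  · intro hc
    have hlift : ∀ i, ∃ x : ZMod 2, c i = algebraMap (ZMod 2) K x := fun i =>
      (hc i).elim (fun h => ⟨0, by rw [h, map_zero]⟩) fun h => ⟨1, by rw [h, map_one]⟩
    choose l hl using hlift
    exact ⟨l, funext hl⟩
  · rintro ⟨l, rfl⟩ i
    exact ((by decide : ∀ x : ZMod 2, x = 0 ∨ x = 1) (l i)).imp (fun h => by simp [h])
      fun h => by simp [h]

lemma sum_algebraMap_mul {n : ℕ} (l : Fin n → ZMod 2) (v : Fin n → K) :
    ∑ i, algebraMap (ZMod 2) K (l i) * v i = Fintype.linearCombination (ZMod 2) v l := by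
  simp [Fintype.linearCombination_apply, Algebra.smul_def]

lemma F2Indep.linearIndependent {n : ℕ} {v : Fin n → K} (hv : F2Indep v) :
    LinearIndependent (ZMod 2) v := by
  rw [Fintype.linearIndependent_iff]
  intro l hl i
  have := hv _ (forall_eq_zero_or_one_iff.2 ⟨l, rfl⟩) (by
    rwa [sum_algebraMap_mul, Fintype.linearCombination_apply]) i
  simpa using this

lemma mem_F2Span_iff {n : ℕ} {v : Fin n → K} {x : K} :
    x ∈ F2Span v ↔ x ∈ Submodule.span (ZMod 2) (Set.range v) := by
  rw [← Fintype.range_linearCombination, F2Span, Set.mem_ofPred_eq]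
  simp only [forall_eq_zero_or_one_iff]
  constructor
  · rintro ⟨_, ⟨l, rfl⟩, rfl⟩
    exact ⟨l, (sum_algebraMap_mul l v).symm⟩
  · rintro ⟨l, rfl⟩
    exact ⟨_, ⟨l, rfl⟩, (sum_algebraMap_mul l v).symm⟩

lemma algebraMap_trace_eq_Tr [Fintype K] {h : ℕ} (hcard : Fintype.card K = 2 ^ h) (x : K) :
    algebraMap (ZMod 2) K (Algebra.trace (ZMod 2) K x) = Tr h x := by
  have hfinrank : Module.finrank (ZMod 2) K = h := by
    have := Module.card_eq_pow_finrank (K := ZMod 2) (V := K)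
    rw [hcard, ZMod.card] at this
    exact (Nat.pow_right_injective le_rfl this).symm
  rw [FiniteField.algebraMap_trace_eq_sum_pow, hfinrank, Tr, Nat.card_zmod]

lemma Tr_eq_algebraMap_iff [Fintype K] {h : ℕ} (hcard : Fintype.card K = 2 ^ h) {x : K}
    {y : ZMod 2} : Tr h x = algebraMap (ZMod 2) K y ↔ Algebra.trace (ZMod 2) K x = y := by
  rw [← algebraMap_trace_eq_Tr hcard, (algebraMap (ZMod 2) K).injective.eq_iff]

end PrimeField

section Q16

/-- The coset function of the `q/16`-construction: the coefficients of `b 0, b 1, b 2` as functions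
of the parameters `l`, with `0` in the last coordinate because every `b j` is orthogonal
to `a 3`. -/
def q16CosetFunction (l : Fin 4 → ZMod 2) : Fin 4 → ZMod 2 :=
  ![l 0 + l 1 + l 2 + l 1 * l 2, l 1 + l 2 + l 0 * l 2, l 2 + l 0 * l 1, 0]

lemma isAdmissible_q16CosetFunction : IsAdmissible 3 q16CosetFunction := by
  -- With `d = l - l'`, the left side equals `1 + (1 + d 0) * (1 + d 1) * (1 + d 2)`.
  have hcube : ∀ x y z x' y' z' : ZMod 2,
      (x - x') * (x + y + z + y * z - (x' + y' + z' + y' * z')) +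
        (y - y') * (y + z + x * z - (y' + z' + x' * z')) +
        (z - z') * (z + x * y - (z' + x' * y')) = 1 ∨ x = x' ∧ y = y' ∧ z = z' := by
    decide
  intro l l'
  refine (hcube (l 0) (l 1) (l 2) (l' 0) (l' 1) (l' 2)).imp (fun h => ?_) fun ⟨h0, h1, h2⟩ => ?_
  · simpa [dotProduct, Fin.sum_univ_four, q16CosetFunction] using h
  · refine ⟨fun i hi => ?_, by simp only [q16CosetFunction, h0, h1, h2]⟩
    fin_cases i <;> first | assumption | exact absurd rfl hi

lemma slopeFamily_three (a : Fin 4 → K) (α : K) :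
    slopeFamily a 3 α = ![a 0 * (a 0 + a 3), a 1 * (a 1 + a 3), a 2 * (a 2 + a 3), a 3 * α] := by
  ext i
  fin_cases i <;> simp [slopeFamily]

variable [Algebra (ZMod 2) K] [Fintype K] {h : ℕ} {a : Fin 4 → K} {b : Fin 3 → K}

lemma mem_ker_dualCoords_trace_iff {n : ℕ} (hcard : Fintype.card K = 2 ^ h) {v : Fin n → K}
    {x : K} : x ∈ LinearMap.ker (dualCoords (Algebra.trace (ZMod 2) K) v) ↔
      ∀ i, Tr h (v i * x) = 0 := by
  simp [funext_iff, dualCoords_apply, ← algebraMap_trace_eq_Tr hcard]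

lemma mem_slopeSet_trace_iff (hcard : Fintype.card K = 2 ^ h) {α x : K} :
    x ∈ slopeSet (Algebra.trace (ZMod 2) K) a 3 α ↔
      Tr h (a 0 * (a 0 + a 3) * x) = 0 ∧ Tr h (a 1 * (a 1 + a 3) * x) = 0 ∧
        Tr h (a 2 * (a 2 + a 3) * x) = 0 ∧ Tr h (a 3 * α * x) = 1 := by
  simp [slopeSet, funext_iff, Fin.forall_fin_succ, dualCoords_apply, slopeFamily,
    ← algebraMap_trace_eq_Tr hcard]

/-- The element `∑ⱼ fⱼ(l) b j`, with `fⱼ(l)` the coordinates of `q16CosetFunction l`, which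
represents the coset over the parameters `l`. -/
def q16Representative (b : Fin 3 → K) (l : Fin 4 → ZMod 2) : K :=
  ∑ j : Fin 3, q16CosetFunction l j.castSucc • b j

lemma dualCoords_q16Representative (hcard : Fintype.card K = 2 ^ h)
    (htr : ∀ (i : Fin 4) (j : Fin 3), Tr h (a i * b j) = if (i : ℕ) = (j : ℕ) then 1 else 0)
    (l : Fin 4 → ZMod 2) :
    dualCoords (Algebra.trace (ZMod 2) K) a (q16Representative b l) = q16CosetFunction l := by
  have hdual : ∀ i j, Algebra.trace (ZMod 2) K (a i * b j) =
      if (i : ℕ) = (j : ℕ) then 1 else 0 := fun i j =>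
    (Tr_eq_algebraMap_iff hcard).1 (by rw [htr]; split_ifs <;> simp)
  ext i
  simp only [q16Representative, dualCoords_apply, Finset.mul_sum, mul_smul_comm, map_sum, map_smul,
    hdual]
  fin_cases i <;> simp [Fin.sum_univ_three, q16CosetFunction]

lemma q16Arc_eq_arcOf (hcard : Fintype.card K = 2 ^ h) (α : K)
    (htr : ∀ (i : Fin 4) (j : Fin 3), Tr h (a i * b j) = if (i : ℕ) = (j : ℕ) then 1 else 0) :
    q16Arc h a α b = arcOf (cosetGraph (Algebra.trace (ZMod 2) K) a q16CosetFunction)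
      (slopeSet (Algebra.trace (ZMod 2) K) a 3 α) := by
  have hrep : ∀ l z, dualCoords (Algebra.trace (ZMod 2) K) a z = q16CosetFunction l ↔
      ∃ s, (∀ i, Tr h (a i * s) = 0) ∧ z = q16Representative b l + s := fun l z => by
    simp only [← dualCoords_q16Representative hcard htr, ← mem_ker_dualCoords_trace_iff hcard]
    constructor
    · intro hz
      exact ⟨z - q16Representative b l, by simp [hz], by ring⟩
    · rintro ⟨s, hs, rfl⟩
      rw [map_add, LinearMap.mem_ker.1 hs, add_zero]
  rw [q16Arc, arcOf]
  congr 1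
  · ext P
    simp only [Set.mem_ofPred_eq, Set.mem_image, mem_slopeSet_trace_iff hcard, and_assoc,
      eq_comm (a := P)]
  · ext P
    simp only [cosetGraph, hrep, forall_eq_zero_or_one_iff]
    constructor
    · rintro ⟨_, ⟨l, rfl⟩, s, hs, rfl⟩
      refine ⟨(_, _), ⟨l, rfl, s, hs, rfl⟩, ?_⟩
      simp [Fintype.linearCombination_apply, Fin.sum_univ_four, Fin.sum_univ_three,
        Algebra.smul_def, q16Representative, q16CosetFunction]
    · rintro ⟨⟨_, _⟩, ⟨l, rfl, s, hs, rfl⟩, rfl⟩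
      refine ⟨_, ⟨l, rfl⟩, s, hs, ?_⟩
      simp [Fintype.linearCombination_apply, Fin.sum_univ_four, Fin.sum_univ_three,
        Algebra.smul_def, q16Representative, q16CosetFunction]

end Q16

/-- Theorem 5.2: the `q/16`-construction yields an elation KM-arc of type
`q/16` in `PG(2,q)` with `q/16`-nucleus `(0:0:1)` and elation line `X = 0` (every set
`{z | (1:γ:z) ∈ A}` is empty or a coset of `S`). -/
theorem q16_construction
    {K : Type*} [Field K] [Fintype K] (h : ℕ) (hh : 5 < h)
    (hcard : Fintype.card K = 2 ^ h)
    (a : Fin 4 → K) (α : K) (b : Fin 3 → K)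
    (hind : F2Indep a) (ha : ∀ i, a i ≠ 0)
    (hsq1 : a 0 ^ 2 / a 3 ∈ F2Span a)
    (hsq2 : a 1 ^ 2 / a 3 ∈ F2Span a)
    (hsq3 : a 2 ^ 2 / a 3 ∈ F2Span a)
    (hαmem : α ∈ F2Span a)
    (hαind : F2Indep ![a 0 * (a 0 + a 3), a 1 * (a 1 + a 3), a 2 * (a 2 + a 3), a 3 * α])
    (hb : ∀ i, b i ≠ 0)
    (htr : ∀ (i : Fin 4) (j : Fin 3),
      Tr h (a i * b j) = if (i : ℕ) = (j : ℕ) then 1 else 0) :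
    IsElationKMArc (2 ^ h) (2 ^ h / 16) (q16Arc h a α b) (pt3 (0 : K) 0 1 (by simp))
      (lineX0 K) ∧
    ∀ γ : K, {z : K | pt3 1 γ z (by simp) ∈ q16Arc h a α b} = ∅ ∨
      ∃ β : K, {z : K | pt3 1 γ z (by simp) ∈ q16Arc h a α b}
        = (fun s => β + s) '' {x : K | ∀ i, Tr h (a i * x) = 0} := by
  have : CharP K 2 := charP_of_card_eq_prime_pow hcard
  let _ : Algebra (ZMod 2) K := ZMod.algebra K 2
  have hlin : LinearIndependent (ZMod 2) a := hind.linearIndependent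
  have hsq : ∀ i, a i ^ 2 / a 3 ∈ Submodule.span (ZMod 2) (Set.range a) := by
    simp only [Fin.forall_fin_succ, ← mem_F2Span_iff]
    refine ⟨hsq1, hsq2, hsq3, mem_F2Span_iff.2 ?_, nofun⟩
    simpa [sq] using Submodule.subset_span (Set.mem_range_self (3 : Fin 4))
  rw [← slopeFamily_three] at hαind
  have harc := isAffineKMArc_cosetGraph (Algebra.trace_ne_zero (ZMod 2) K) hlin hsq
    (mem_F2Span_iff.1 hαmem) hαind.linearIndependent isAdmissible_q16CosetFunction
  have hS := hasCosetFibers_cosetGraph (τ := Algebra.trace (ZMod 2) K) hlin q16CosetFunction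
  have hker : {x | ∀ i, Tr h (a i * x) = 0} =
      ((LinearMap.ker (dualCoords (Algebra.trace (ZMod 2) K) a)).toAddSubgroup : Set K) :=
    Set.ext fun x => (mem_ker_dualCoords_trace_iff hcard).symm
  have ht : 2 < 2 ^ h / 16 := by
    have := Nat.pow_le_pow_right two_pos hh
    omega
  rw [Nat.card_eq_fintype_card, hcard, Fintype.card_fin] at harc
  simp only [q16Arc_eq_arcOf hcard α htr, pt3_one_mem_arcOf, hker]
  refine ⟨?_, hS.fiber_eq_empty_or_coset⟩
  simpa [hcard] using isElationKMArc_arcOf harc hS ht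
end
end

section
/- Let q = 2^h and let T be a subgroup of the additive group (F_q,+) with |T| = 16, 1 ∈ T, and x² ∈ T for every x ∈ T. Then one of the following holds: (i) 4 divides h and T = {x ∈ F_q : x^16 = x}, the subfield F_16 of F_q; (ii) 6 divides h and T = {a + b : a, b ∈ F_q, a^4 = a, b^8 = b}, i.e. T = F_4 + F_8; (iii) 7 divides h and there exists z ∈ F_q with z^7 = z + 1 such that T = ⟨1, z, z², z⁴⟩ or T = ⟨1, z^11, z^22, z^44⟩ (F_2-spans). In particular such a subgroup T can exist only if 4, 6 or 7 divides h. -/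
open scoped Classical

noncomputable section

variable {K : Type*} [Field K]

/-! The group `T` is an `𝔽₂`-space stable under the Frobenius `φ`. If `f` is the characteristic
polynomial of `φ` on `T`, then `T` lies in the kernel of `f(φ)`; that kernel is the zero set of the
linearized polynomial associated with `f`, so it has at most `2 ^ deg f = |T|` elements and
`T = ker f(φ)`. Since `φ` is injective and fixes `1`, `f` is a quartic over `𝔽₂` with `f(0) ≠ 0` and
`f(1) = 0`. There are four of these, with factors `X - 1`, `X ^ 2 + X + 1`, `X ^ 3 + X + 1` and
`X ^ 3 + X ^ 2 + 1`, and each divides `X ^ n - 1` for some `n ∈ {4, 6, 7}`. Hence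
`T ⊆ 𝔽_{2 ^ gcd(n, h)}`, and comparing sizes gives `n ∣ h`. -/

section Frobenius

open Polynomial Module

theorem pow_pow_gcd_eq_self {M : Type*} [Monoid M] {x : M} {q m n : ℕ}
    (hm : x ^ q ^ m = x) (hn : x ^ q ^ n = x) : x ^ q ^ m.gcd n = x := by
  have isPeriodicPt_iff (i : ℕ) : Function.IsPeriodicPt (· ^ q) i x ↔ x ^ q ^ i = x := by
    rw [Function.IsPeriodicPt, Function.IsFixedPt, pow_iterate]
  rw [← isPeriodicPt_iff] at hm hn ⊢
  exact hm.gcd hn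

theorem aeval_restrict_apply {A M : Type*} [CommRing A] [AddCommGroup M] [Module A M]
    {φ : End A M} {V : Submodule A M} (hV : ∀ x ∈ V, φ x ∈ V) (f : A[X]) (x : V) :
    (aeval (φ.restrict hV) f x : M) = aeval φ f x := by
  simp only [aeval_eq_sum_range, LinearMap.sum_apply, LinearMap.smul_apply,
    AddSubmonoidClass.coe_finsetSum, Submodule.coe_smul]
  exact Finset.sum_congr rfl fun i _ ↦ by rw [End.pow_restrict i hV, LinearMap.coe_restrict_apply]

theorem le_ker_aeval_charpoly_restrict {A M : Type*} [CommRing A] [AddCommGroup M] [Module A M]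
    {φ : End A M} {V : Submodule A M} [Module.Free A V] [Module.Finite A V]
    (hV : ∀ x ∈ V, φ x ∈ V) :
    V ≤ LinearMap.ker (aeval φ (φ.restrict hV).charpoly) := fun x hx ↦ by
  rw [LinearMap.mem_ker, ← aeval_restrict_apply hV _ ⟨x, hx⟩, LinearMap.aeval_self_charpoly]
  rfl

theorem ker_aeval_le_ker_aeval_of_dvd {A M : Type*} [CommRing A] [AddCommGroup M] [Module A M]
    (φ : End A M) {f g : A[X]} (hfg : f ∣ g) :
    LinearMap.ker (aeval φ f) ≤ LinearMap.ker (aeval φ g) := by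
  obtain ⟨c, rfl⟩ := hfg
  exact le_sup_left.trans sup_ker_aeval_le_ker_aeval_mul

theorem sup_ker_aeval_mul_eq_ker_aeval_of_isCoprime {A M : Type*} [CommRing A] [AddCommGroup M]
    [Module A M] (φ : End A M) (g : A[X]) {a b : A[X]} (hab : IsCoprime a b) :
    LinearMap.ker (aeval φ (g * a)) ⊔ LinearMap.ker (aeval φ (g * b)) =
      LinearMap.ker (aeval φ (g * a * b)) := by
  refine le_antisymm (sup_le ?_ ?_) fun x hx ↦ ?_
  · exact ker_aeval_le_ker_aeval_of_dvd φ ⟨b, rfl⟩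
  · exact ker_aeval_le_ker_aeval_of_dvd φ ⟨a, by ring⟩
  · obtain ⟨s, t, hst⟩ := hab
    have aeval_mul_eq_zero (c : A[X]) : aeval φ (c * (g * a * b)) x = 0 := by
      rw [aeval_mul, End.mul_apply, hx, map_zero]
    refine Submodule.mem_sup.2 ⟨aeval φ (t * b) x, ?_, aeval φ (s * a) x, ?_, ?_⟩
    · rw [LinearMap.mem_ker, ← End.mul_apply, ← aeval_mul, ← aeval_mul_eq_zero t]
      ring_nf
    · rw [LinearMap.mem_ker, ← End.mul_apply, ← aeval_mul, ← aeval_mul_eq_zero s]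
      ring_nf
    · rw [← LinearMap.add_apply, ← map_add, add_comm, hst, map_one, End.one_apply]

theorem dvd_of_irreducible_of_aeval_apply_eq_zero {A M : Type*} [Field A] [AddCommGroup M]
    [Module A M] {φ : End A M} {m g : A[X]} {z : M} (hm : Irreducible m) (hz : z ≠ 0)
    (hmz : aeval φ m z = 0) (hgz : aeval φ g z = 0) : m ∣ g := by
  by_contra hmg
  have hdisj := disjoint_ker_aeval_of_isCoprime φ (hm.coprime_iff_not_dvd.2 hmg)
  exact hz (Submodule.disjoint_def.1 hdisj z hmz hgz)

theorem linearIndependent_pow_apply_of_irreducible {A M : Type*} [Field A] [AddCommGroup M]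
    [Module A M] {φ : End A M} {m : A[X]} {z : M} (hm : Irreducible m) (hz : z ≠ 0)
    (hmz : aeval φ m z = 0) :
    LinearIndependent A fun i : Fin m.natDegree ↦ (φ ^ (i : ℕ)) z := by
  refine Fintype.linearIndependent_iff.2 fun c hc ↦ ?_
  have hgz : aeval φ (ofFn m.natDegree c) z = 0 := by
    simpa [ofFn_eq_sum_monomial, aeval_monomial, LinearMap.sum_apply] using hc
  have hg : ofFn m.natDegree c = 0 :=
    eq_zero_of_dvd_of_degree_lt (dvd_of_irreducible_of_aeval_apply_eq_zero hm hz hmz hgz)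
      ((ofFn_degree_lt c).trans_eq (degree_eq_natDegree hm.ne_zero).symm)
  exact congrFun (injective_ofFn _ (hg.trans (map_zero _).symm))

variable (F R : Type*) [Field F] [Fintype F] [CommRing R] [Algebra F R]

/-- The `q`-power Frobenius of an algebra over the field `F` with `q` elements, taken as an
`F`-linear endomorphism so that polynomials over `F` can be evaluated at it. -/
def frobEnd : End F R := (FiniteField.frobeniusAlgHom F R).toLinearMap

variable {F R}

theorem frobEnd_pow_apply (n : ℕ) (x : R) : (frobEnd F R ^ n) x = x ^ Fintype.card F ^ n := by
  rw [End.coe_pow, frobEnd, AlgHom.coe_toLinearMap, FiniteField.coe_frobeniusAlgHom, pow_iterate]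

theorem frobEnd_apply (x : R) : frobEnd F R x = x ^ Fintype.card F := rfl

theorem mem_ker_aeval_frobEnd_X_pow_sub_one {n : ℕ} {x : R} :
    x ∈ LinearMap.ker (aeval (frobEnd F R) (X ^ n - 1 : F[X])) ↔ x ^ Fintype.card F ^ n = x := by
  simp [frobEnd_pow_apply, sub_eq_zero]

theorem one_mem_ker_aeval_frobEnd_X_sub_one :
    (1 : R) ∈ LinearMap.ker (aeval (frobEnd F R) (X - 1 : F[X])) := by
  simp [frobEnd_apply]

/-- The linearized `q`-associate `∑ aᵢ X ^ q ^ i` of `f = ∑ aᵢ X ^ i`: the polynomial whose values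
are those of the operator `f (frobEnd F R)`. -/
def qAssociate (f : F[X]) : F[X] := f.sum fun i a ↦ monomial (Fintype.card F ^ i) a

theorem aeval_qAssociate (f : F[X]) (x : R) :
    aeval x (qAssociate f) = aeval (frobEnd F R) f x := by
  rw [aeval_endomorphism, qAssociate, Polynomial.sum, Polynomial.sum, map_sum]
  simp only [aeval_monomial, frobEnd_pow_apply, Algebra.smul_def]

theorem coeff_qAssociate_card_pow (f : F[X]) (n : ℕ) :
    (qAssociate f).coeff (Fintype.card F ^ n) = f.coeff n := by
  have card_pow_inj (i : ℕ) : Fintype.card F ^ i = Fintype.card F ^ n ↔ i = n :=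
    Nat.pow_right_inj Fintype.one_lt_card
  simp +contextual [qAssociate, Polynomial.sum, coeff_monomial, card_pow_inj]

theorem qAssociate_ne_zero {f : F[X]} (hf : f ≠ 0) : qAssociate f ≠ 0 := fun h ↦
  hf <| Polynomial.ext fun n ↦ by rw [← coeff_qAssociate_card_pow, h, coeff_zero, coeff_zero]

theorem natDegree_qAssociate_le (f : F[X]) :
    (qAssociate f).natDegree ≤ Fintype.card F ^ f.natDegree :=
  natDegree_sum_le_of_forall_le _ _ fun i hi ↦ (natDegree_monomial_le _).trans <|
    Nat.pow_le_pow_right Fintype.card_pos (le_natDegree_of_mem_supp i hi)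

variable [IsDomain R] {f : F[X]} {V : Submodule F R}

theorem coe_ker_aeval_frobEnd (hf : f ≠ 0) :
    (LinearMap.ker (aeval (frobEnd F R) f) : Set R) = (qAssociate f).rootSet R := by
  ext x
  rw [mem_rootSet_of_ne (qAssociate_ne_zero hf), aeval_qAssociate, SetLike.mem_coe,
    LinearMap.mem_ker]

theorem finite_ker_aeval_frobEnd (hf : f ≠ 0) :
    Finite (LinearMap.ker (aeval (frobEnd F R) f)) :=
  Set.Finite.to_subtype (coe_ker_aeval_frobEnd (R := R) hf ▸ rootSet_finite _ R)

theorem finrank_ker_aeval_frobEnd_le (hf : f ≠ 0) :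
    finrank F (LinearMap.ker (aeval (frobEnd F R) f)) ≤ f.natDegree := by
  have := finite_ker_aeval_frobEnd (R := R) hf
  refine (Nat.pow_le_pow_iff_right (Fintype.one_lt_card (α := F))).1 ?_
  calc Fintype.card F ^ finrank F (LinearMap.ker (aeval (frobEnd F R) f))
      = ((qAssociate f).rootSet R).ncard := by
        rw [← Nat.card_eq_fintype_card, ← natCard_eq_pow_finrank, ← coe_ker_aeval_frobEnd hf]
        rfl
    _ ≤ (qAssociate f).natDegree := ncard_rootSet_le (qAssociate f) R
    _ ≤ Fintype.card F ^ f.natDegree := natDegree_qAssociate_le f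

theorem finrank_le_natDegree_of_le_ker (hf : f ≠ 0)
    (hV : V ≤ LinearMap.ker (aeval (frobEnd F R) f)) : finrank F V ≤ f.natDegree := by
  have := finite_ker_aeval_frobEnd (R := R) hf
  exact (Submodule.finrank_mono hV).trans (finrank_ker_aeval_frobEnd_le hf)

theorem eq_ker_aeval_frobEnd (hf : f ≠ 0) (hV : V ≤ LinearMap.ker (aeval (frobEnd F R) f))
    (hfV : f.natDegree ≤ finrank F V) : V = LinearMap.ker (aeval (frobEnd F R) f) := by
  have := finite_ker_aeval_frobEnd (R := R) hf
  exact Submodule.eq_of_le_of_finrank_le hV ((finrank_ker_aeval_frobEnd_le hf).trans hfV)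

theorem eq_ker_aeval_frobEnd_charpoly_restrict [Module.Finite F V]
    (hV : ∀ x ∈ V, frobEnd F R x ∈ V) :
    V = LinearMap.ker (aeval (frobEnd F R) ((frobEnd F R).restrict hV).charpoly) :=
  eq_ker_aeval_frobEnd (LinearMap.charpoly_monic _).ne_zero (le_ker_aeval_charpoly_restrict hV)
    (LinearMap.charpoly_natDegree _).le

theorem eval_zero_charpoly_frobEnd_restrict_ne_zero [Module.Finite F V]
    (hV : ∀ x ∈ V, frobEnd F R x ∈ V) : ((frobEnd F R).restrict hV).charpoly.eval 0 ≠ 0 := by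
  intro h0
  obtain ⟨x, hx⟩ := ((End.hasEigenvalue_iff_isRoot_charpoly _ 0).2 h0).exists_hasEigenvector
  have hpow : (x : R) ^ Fintype.card F = 0 := by
    simpa [frobEnd_apply] using congrArg Subtype.val hx.apply_eq_smul
  exact hx.2 (Subtype.ext (eq_zero_of_pow_eq_zero hpow))

theorem eval_one_charpoly_frobEnd_restrict [Module.Finite F V]
    (hV : ∀ x ∈ V, frobEnd F R x ∈ V) (h1 : 1 ∈ V) :
    ((frobEnd F R).restrict hV).charpoly.eval 1 = 0 := by
  have hfix : (frobEnd F R).restrict hV ⟨1, h1⟩ = (1 : F) • ⟨1, h1⟩ :=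
    Subtype.ext (by simp [frobEnd_apply])
  have hne : (⟨1, h1⟩ : V) ≠ 0 := fun h ↦ one_ne_zero (congrArg Subtype.val h)
  exact (End.hasEigenvalue_iff_isRoot_charpoly _ 1).1
    (End.hasEigenvalue_of_hasEigenvector (End.hasEigenvector_iff.2
      ⟨End.mem_eigenspace_iff.2 hfix, hne⟩))

theorem dvd_of_dvd_X_pow_sub_one {n h : ℕ} (hn : 0 < n) (hnV : n < 2 * finrank F V)
    (hV : V ≤ LinearMap.ker (aeval (frobEnd F R) f)) (hf : f ∣ X ^ n - 1)
    (hh : ∀ x ∈ V, x ^ Fintype.card F ^ h = x) : n ∣ h := by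
  have hle : V ≤ LinearMap.ker (aeval (frobEnd F R) (X ^ n.gcd h - 1 : F[X])) := fun x hx ↦
    mem_ker_aeval_frobEnd_X_pow_sub_one.2 <| pow_pow_gcd_eq_self
      (mem_ker_aeval_frobEnd_X_pow_sub_one.1 (ker_aeval_le_ker_aeval_of_dvd _ hf (hV hx)))
      (hh x hx)
  have hgcd : 0 < n.gcd h := Nat.gcd_pos_of_pos_left h hn
  have hfin : finrank F V ≤ n.gcd h := by
    rw [← C_1] at hle
    exact (finrank_le_natDegree_of_le_ker (X_pow_sub_C_ne_zero hgcd 1) hle).trans_eq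
      natDegree_X_pow_sub_C
  -- A proper divisor of `n` is at most `n / 2`, hence smaller than the dimension of `V`.
  obtain ⟨c, hc⟩ := Nat.gcd_dvd_left n h
  have hc1 : c = 1 := by nlinarith
  rw [hc1, mul_one] at hc
  exact hc ▸ Nat.gcd_dvd_right n h

theorem exists_ne_zero_aeval_frobEnd_eq_zero {g m : F[X]} (hg : g ≠ 0)
    (hgV : g.natDegree < finrank F V) (hV : V ≤ LinearMap.ker (aeval (frobEnd F R) (m * g))) :
    ∃ z : R, z ≠ 0 ∧ aeval (frobEnd F R) m z = 0 := by
  have hle : ¬V ≤ LinearMap.ker (aeval (frobEnd F R) g) := fun hle ↦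
    hgV.not_ge (finrank_le_natDegree_of_le_ker hg hle)
  obtain ⟨x, hx, hgx⟩ := SetLike.not_le_iff_exists.1 hle
  exact ⟨aeval (frobEnd F R) g x, hgx, by
    simpa only [aeval_mul, LinearMap.mem_ker, End.mul_apply] using hV hx⟩

theorem ker_aeval_frobEnd_eq_span_of_irreducible {m : F[X]} (hm : Irreducible m) {z : R}
    (hz : z ≠ 0) (hmz : aeval (frobEnd F R) m z = 0) :
    LinearMap.ker (aeval (frobEnd F R) m) =
      Submodule.span F (Set.range fun i : Fin m.natDegree ↦ z ^ Fintype.card F ^ (i : ℕ)) := by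
  simp only [← frobEnd_pow_apply (F := F)]
  refine (eq_ker_aeval_frobEnd hm.ne_zero (Submodule.span_le.2 ?_) ?_).symm
  · rintro _ ⟨i, rfl⟩
    have hcomm := congrArg (aeval (frobEnd F R)) (mul_comm m (X ^ (i : ℕ)))
    simp only [aeval_mul, aeval_X_pow] at hcomm
    simpa [hmz] using LinearMap.congr_fun hcomm z
  · rw [finrank_span_eq_card (linearIndependent_pow_apply_of_irreducible hm hz hmz),
      Fintype.card_fin]

theorem ker_aeval_frobEnd_X_sub_one :
    LinearMap.ker (aeval (frobEnd F R) (X - 1 : F[X])) = Submodule.span F {1} := by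
  have hX : (X - 1 : F[X]) = X - C 1 := by rw [C_1]
  have h1 := one_mem_ker_aeval_frobEnd_X_sub_one (F := F) (R := R)
  have hspan := ker_aeval_frobEnd_eq_span_of_irreducible (hX ▸ irreducible_X_sub_C (1 : F))
    one_ne_zero h1
  have : NeZero (X - 1 : F[X]).natDegree := ⟨by rw [hX, natDegree_X_sub_C]; exact one_ne_zero⟩
  simpa only [one_pow, Set.range_const] using hspan

theorem ker_aeval_frobEnd_mul_X_sub_one_eq_span {m : F[X]} (hm : Irreducible m)
    (hm1 : m.eval 1 ≠ 0) {z : R} (hz : z ≠ 0) (hmz : aeval (frobEnd F R) m z = 0) :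
    LinearMap.ker (aeval (frobEnd F R) (m * (X - 1))) =
      Submodule.span F (insert 1
        (Set.range fun i : Fin m.natDegree ↦ z ^ Fintype.card F ^ (i : ℕ))) := by
  have hcop : IsCoprime (X - 1) m := by
    rw [← C_1]
    exact (irreducible_X_sub_C 1).coprime_iff_not_dvd.2 fun h ↦ hm1 (dvd_iff_isRoot.1 h)
  rw [mul_comm, ← sup_ker_aeval_eq_ker_aeval_mul_of_coprime _ hcop, ker_aeval_frobEnd_X_sub_one,
    ker_aeval_frobEnd_eq_span_of_irreducible hm hz hmz, ← Submodule.span_union,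
    Set.singleton_union]

end Frobenius

section Binary

open Polynomial Module

theorem charP_of_natCard_eq_prime_pow {R : Type*} [CommRing R] [IsDomain R] {p n : ℕ}
    (hp : p.Prime) (T : AddSubgroup R) (hT : Nat.card T = p ^ n) (h1 : 1 ∈ T) : CharP R p := by
  refine (CharP.charP_iff_prime_eq_zero hp).2 (eq_zero_of_pow_eq_zero (n := n) ?_)
  have hcard : Nat.card T • (⟨1, h1⟩ : T) = 0 := card_nsmul_eq_zero'
  simpa [hT] using congrArg Subtype.val hcard

theorem irreducible_X_cube_add_X_add_one : Irreducible (X ^ 3 + X + 1 : (ZMod 2)[X]) := by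
  have hdeg : (X ^ 3 + X + 1 : (ZMod 2)[X]).natDegree = 3 := by compute_degree!
  refine irreducible_of_degree_le_three_of_not_isRoot (by simp [hdeg]) fun x ↦ ?_
  simp only [IsRoot.def, eval_add, eval_pow, eval_X, eval_one]
  decide +revert

theorem irreducible_X_cube_add_X_sq_add_one : Irreducible (X ^ 3 + X ^ 2 + 1 : (ZMod 2)[X]) := by
  have hdeg : (X ^ 3 + X ^ 2 + 1 : (ZMod 2)[X]).natDegree = 3 := by compute_degree!
  refine irreducible_of_degree_le_three_of_not_isRoot (by simp [hdeg]) fun x ↦ ?_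
  simp only [IsRoot.def, eval_add, eval_pow, eval_X, eval_one]
  decide +revert

theorem monic_quartic_cases {f : (ZMod 2)[X]} (hf : f.Monic) (hdeg : f.natDegree = 4)
    (h0 : f.eval 0 ≠ 0) (h1 : f.eval 1 = 0) :
    f = X ^ 4 - 1 ∨ f = (X - 1) * (X + 1) * (X ^ 2 + X + 1) ∨
      f = (X ^ 3 + X + 1) * (X - 1) ∨ f = (X ^ 3 + X ^ 2 + 1) * (X - 1) := by
  have hsum : f = X ^ 4 + (C (f.coeff 0) + C (f.coeff 1) * X + C (f.coeff 2) * X ^ 2 +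
      C (f.coeff 3) * X ^ 3) := by
    simpa [hdeg, Finset.sum_range_succ] using hf.as_sum
  generalize f.coeff 0 = a, f.coeff 1 = b, f.coeff 2 = c, f.coeff 3 = d at hsum
  have htwo : (2 : (ZMod 2)[X]) = 0 := CharTwo.two_eq_zero
  have one_of_ne_zero : ∀ t : ZMod 2, t ≠ 0 → t = 1 := by decide
  have solutions : ∀ b c d : ZMod 2, 1 + (1 + b + c + d) = 0 →
      (b = 0 ∧ c = 0 ∧ d = 0) ∨ (b = 1 ∧ c = 0 ∧ d = 1) ∨ (b = 0 ∧ c = 1 ∧ d = 1) ∨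
        (b = 1 ∧ c = 1 ∧ d = 0) := by decide
  obtain rfl : a = 1 := one_of_ne_zero a (by simpa [hsum] using h0)
  obtain ⟨rfl, rfl, rfl⟩ | ⟨rfl, rfl, rfl⟩ | ⟨rfl, rfl, rfl⟩ | ⟨rfl, rfl, rfl⟩ :=
    solutions b c d (by simpa [hsum] using h1)
  all_goals simp only [C_0, C_1] at hsum
  · exact .inl (by linear_combination hsum + htwo)
  · exact .inr (.inl (by linear_combination hsum + (X + 1) * htwo))
  · exact .inr (.inr (.inl (by linear_combination hsum + (X ^ 3 + 1) * htwo)))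
  · exact .inr (.inr (.inr (by linear_combination hsum + (X ^ 2 + 1) * htwo)))

theorem quartic_dvd_X_pow_six_sub_one {A : Type*} [CommRing A] :
    ((X - 1) * (X + 1) * (X ^ 2 + X + 1) : A[X]) ∣ X ^ 6 - 1 :=
  ⟨X ^ 2 - X + 1, by ring⟩

theorem X_pow_seven_sub_one_eq_mul :
    (X ^ 7 - 1 : (ZMod 2)[X]) = (X ^ 3 + X + 1) * (X - 1) * (X ^ 3 + X ^ 2 + 1) := by
  have htwo : (2 : (ZMod 2)[X]) = 0 := CharTwo.two_eq_zero
  linear_combination (X ^ 3 - X ^ 4) * htwo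

variable [Algebra (ZMod 2) K]

theorem F2Span_eq_span {n : ℕ} (v : Fin n → K) :
    F2Span v = (Submodule.span (ZMod 2) (Set.range v) : Set K) := by
  have eq_zero_or_one (t : ZMod 2) : t = 0 ∨ t = 1 := by decide +revert
  ext x
  rw [SetLike.mem_coe, Submodule.mem_span_range_iff_exists_fun]
  constructor
  · rintro ⟨c, hc, rfl⟩
    have exists_algebraMap_eq (i : Fin n) : ∃ a : ZMod 2, algebraMap (ZMod 2) K a = c i :=
      (hc i).elim (fun h ↦ ⟨0, by simp [h]⟩) fun h ↦ ⟨1, by simp [h]⟩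
    choose a ha using exists_algebraMap_eq
    exact ⟨a, by simp only [Algebra.smul_def, ha]⟩
  · rintro ⟨a, rfl⟩
    refine ⟨fun i ↦ algebraMap (ZMod 2) K (a i), fun i ↦ ?_, by simp only [Algebra.smul_def]⟩
    exact (eq_zero_or_one (a i)).imp (fun h ↦ by simp [h]) fun h ↦ by simp [h]

theorem mem_ker_aeval_frobEnd_quartic_iff {x : K} :
    x ∈ LinearMap.ker
        (aeval (frobEnd (ZMod 2) K) ((X - 1) * (X + 1) * (X ^ 2 + X + 1) : (ZMod 2)[X])) ↔
      ∃ u v : K, u ^ 4 = u ∧ v ^ 8 = v ∧ x = u + v := by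
  have hcop : IsCoprime (X + 1 : (ZMod 2)[X]) (X ^ 2 + X + 1) := ⟨-X, 1, by ring⟩
  have hquad : ((X - 1) * (X + 1) : (ZMod 2)[X]) = X ^ 2 - 1 := by ring
  have hcubic : ((X - 1) * (X ^ 2 + X + 1) : (ZMod 2)[X]) = X ^ 3 - 1 := by ring
  rw [← sup_ker_aeval_mul_eq_ker_aeval_of_isCoprime _ _ hcop, hquad, hcubic, Submodule.mem_sup]
  simp only [mem_ker_aeval_frobEnd_X_pow_sub_one, ZMod.card]
  constructor
  · rintro ⟨u, hu, v, hv, rfl⟩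
    exact ⟨u, v, hu, hv, rfl⟩
  · rintro ⟨u, v, hu, hv, rfl⟩
    exact ⟨u, hu, v, hv, rfl⟩

theorem exists_ker_aeval_frobEnd_eq_F2Span {m : (ZMod 2)[X]} (hm : Irreducible m)
    (hdeg : m.natDegree = 3)
    (hker : 1 < finrank (ZMod 2) (LinearMap.ker (aeval (frobEnd (ZMod 2) K) (m * (X - 1))))) :
    ∃ z : K, z ≠ 0 ∧ aeval (frobEnd (ZMod 2) K) m z = 0 ∧
      (LinearMap.ker (aeval (frobEnd (ZMod 2) K) (m * (X - 1))) : Set K) =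
        F2Span ![1, z, z ^ 2, z ^ 4] := by
  have hm1 : m.eval 1 ≠ 0 := hm.not_isRoot_of_natDegree_ne_one (by omega)
  have hX : (X - 1 : (ZMod 2)[X]) = X - C 1 := by rw [C_1]
  have hdegX : (X - 1 : (ZMod 2)[X]).natDegree = 1 := hX ▸ natDegree_X_sub_C 1
  obtain ⟨z, hz, hmz⟩ := exists_ne_zero_aeval_frobEnd_eq_zero (hX ▸ X_sub_C_ne_zero 1)
    (hdegX.trans_lt hker) le_rfl
  refine ⟨z, hz, hmz, ?_⟩
  rw [ker_aeval_frobEnd_mul_X_sub_one_eq_span hm hm1 hz hmz, F2Span_eq_span, hdeg, ← Fin.range_cons]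
  congr! 4
  ext i
  fin_cases i <;> simp

theorem pow_seven_eq_add_one {z : K} (hz : z ≠ 0)
    (hmz : aeval (frobEnd (ZMod 2) K) (X ^ 3 + X + 1 : (ZMod 2)[X]) z = 0) : z ^ 7 = z + 1 := by
  have : CharP K 2 := charP_of_injective_algebraMap' (ZMod 2) 2
  have htwo : (2 : K) = 0 := CharTwo.two_eq_zero
  have hsum : z ^ 8 + z ^ 2 + z = 0 := by simpa [frobEnd_pow_apply, frobEnd_apply] using hmz
  refine mul_left_cancel₀ hz ?_
  linear_combination hsum - (z ^ 2 + z) * htwo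

theorem pow_seven_eq_cube_add_one {z : K} (hz : z ≠ 0)
    (hmz : aeval (frobEnd (ZMod 2) K) (X ^ 3 + X ^ 2 + 1 : (ZMod 2)[X]) z = 0) :
    z ^ 7 = z ^ 3 + 1 := by
  have : CharP K 2 := charP_of_injective_algebraMap' (ZMod 2) 2
  have htwo : (2 : K) = 0 := CharTwo.two_eq_zero
  have hsum : z ^ 8 + z ^ 4 + z = 0 := by simpa [frobEnd_pow_apply, frobEnd_apply] using hmz
  refine mul_left_cancel₀ hz ?_
  linear_combination hsum - (z ^ 4 + z) * htwo

theorem pow_eq_one_of_pow_seven_eq_cube_add_one {R : Type*} [CommRing R] [IsDomain R] [CharP R 2]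
    {w : R} (hw : w ^ 7 = w ^ 3 + 1) : w ^ 127 = 1 := by
  have htwo : (2 : R) = 0 := CharTwo.two_eq_zero
  have h8 : w ^ 8 = w ^ 4 + w := by linear_combination w * hw
  have h8_frob (i : ℕ) : w ^ (8 * 2 ^ i) = w ^ (4 * 2 ^ i) + w ^ 2 ^ i := by
    rw [pow_mul, h8, add_pow_char_pow, ← pow_mul]
  have h128 : w ^ 127 * w = 1 * w := by
    linear_combination h8_frob 4 + h8_frob 3 + h8_frob 2 + h8 + (w ^ 16 + w ^ 4) * htwo
  refine mul_right_cancel₀ (fun hw0 ↦ ?_) h128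
  simp [hw0] at hw

theorem exists_pow_seven_eq_add_one {R : Type*} [CommRing R] [IsDomain R] [CharP R 2] {w : R}
    (hw : w ^ 7 = w ^ 3 + 1) : ∃ z : R, z ^ 7 = z + 1 ∧ z ^ 11 = w := by
  have h127 := pow_eq_one_of_pow_seven_eq_cube_add_one hw
  have h13 : (w ^ 13) ^ 7 = w ^ 13 + 1 := by grind
  -- `8 * 13 = 104` inverts `11` modulo `127`, and `x ↦ x ^ 8` preserves the equation in `h13`.
  refine ⟨(w ^ 13) ^ 2 ^ 3, ?_, ?_⟩
  · rw [← pow_mul, mul_comm (2 ^ 3), pow_mul, h13, add_pow_char_pow, one_pow]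
  · calc ((w ^ 13) ^ 2 ^ 3) ^ 11 = (w ^ 127) ^ 9 * w := by ring
      _ = w := by rw [h127, one_pow, one_mul]

theorem eq_ker_aeval_frobEnd_of_finrank_eq_four {V : Submodule (ZMod 2) K}
    (hdim : finrank (ZMod 2) V = 4) (h1 : 1 ∈ V) (hV : ∀ x ∈ V, frobEnd (ZMod 2) K x ∈ V) :
    ∃ f : (ZMod 2)[X], V = LinearMap.ker (aeval (frobEnd (ZMod 2) K) f) ∧
      (f = X ^ 4 - 1 ∨ f = (X - 1) * (X + 1) * (X ^ 2 + X + 1) ∨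
        f = (X ^ 3 + X + 1) * (X - 1) ∨ f = (X ^ 3 + X ^ 2 + 1) * (X - 1)) := by
  have : Module.Finite (ZMod 2) V := finite_of_finrank_eq_succ hdim
  exact ⟨_, eq_ker_aeval_frobEnd_charpoly_restrict hV, monic_quartic_cases
    (LinearMap.charpoly_monic _) ((LinearMap.charpoly_natDegree _).trans hdim)
    (eval_zero_charpoly_frobEnd_restrict_ne_zero hV) (eval_one_charpoly_frobEnd_restrict hV h1)⟩

theorem submodule_finrank_four_classification (h : ℕ) (V : Submodule (ZMod 2) K)
    (hdim : finrank (ZMod 2) V = 4) (h1 : 1 ∈ V) (hsq : ∀ x ∈ V, x ^ 2 ∈ V)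
    (hh : ∀ x ∈ V, x ^ 2 ^ h = x) :
    (4 ∣ h ∧ (V : Set K) = {x : K | x ^ 16 = x}) ∨
    (6 ∣ h ∧ (V : Set K) = {x : K | ∃ u v : K, u ^ 4 = u ∧ v ^ 8 = v ∧ x = u + v}) ∨
    (7 ∣ h ∧ ∃ z : K, z ^ 7 = z + 1 ∧
      ((V : Set K) = F2Span ![1, z, z ^ 2, z ^ 4] ∨
       (V : Set K) = F2Span ![1, z ^ 11, z ^ 22, z ^ 44])) := by
  obtain ⟨f, hVf, hf⟩ := eq_ker_aeval_frobEnd_of_finrank_eq_four hdim h1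
    (by simpa only [frobEnd_apply, ZMod.card] using hsq)
  have dvd_h {n : ℕ} (hn : 0 < n) (hn8 : n < 8) (hfn : f ∣ X ^ n - 1) : n ∣ h :=
    dvd_of_dvd_X_pow_sub_one hn (by omega) hVf.le hfn (by simpa only [ZMod.card] using hh)
  obtain rfl | rfl | rfl | rfl := hf
  · refine .inl ⟨dvd_h (by decide) (by decide) dvd_rfl, Set.ext fun x ↦ ?_⟩
    rw [hVf, SetLike.mem_coe, mem_ker_aeval_frobEnd_X_pow_sub_one, ZMod.card]
    rfl
  · refine .inr (.inl ⟨dvd_h (by decide) (by decide) quartic_dvd_X_pow_six_sub_one, ?_⟩)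
    rw [hVf]
    exact Set.ext fun x ↦ mem_ker_aeval_frobEnd_quartic_iff
  · obtain ⟨z, hz, hmz, hspan⟩ := exists_ker_aeval_frobEnd_eq_F2Span (K := K)
      irreducible_X_cube_add_X_add_one (by compute_degree!) (by rw [← hVf, hdim]; decide)
    exact .inr (.inr ⟨dvd_h (by decide) (by decide) (Dvd.intro _ X_pow_seven_sub_one_eq_mul.symm),
      z, pow_seven_eq_add_one hz hmz, .inl (hVf ▸ hspan)⟩)
  · obtain ⟨w, hw, hmw, hspan⟩ := exists_ker_aeval_frobEnd_eq_F2Span (K := K)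
      irreducible_X_cube_add_X_sq_add_one (by compute_degree!) (by rw [← hVf, hdim]; decide)
    have : CharP K 2 := charP_of_injective_algebraMap' (ZMod 2) 2
    obtain ⟨z, hz, rfl⟩ := exists_pow_seven_eq_add_one (pow_seven_eq_cube_add_one hw hmw)
    refine .inr (.inr ⟨dvd_h (by decide) (by decide) ?_, z, hz, .inr ?_⟩)
    · exact ⟨X ^ 3 + X + 1, by rw [X_pow_seven_sub_one_eq_mul]; ring⟩
    · rw [hVf, hspan, ← pow_mul, ← pow_mul]

end Binary

theorem subgroup16_classification_general (h : ℕ) (T : AddSubgroup K) (hT16 : Nat.card T = 16)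
    (h1T : (1 : K) ∈ T) (hsq : ∀ x ∈ T, x ^ 2 ∈ T) (hh : ∀ x ∈ T, x ^ 2 ^ h = x) :
    (4 ∣ h ∧ (T : Set K) = {x : K | x ^ 16 = x}) ∨
    (6 ∣ h ∧ (T : Set K) = {x : K | ∃ u v : K, u ^ 4 = u ∧ v ^ 8 = v ∧ x = u + v}) ∨
    (7 ∣ h ∧ ∃ z : K, z ^ 7 = z + 1 ∧
      ((T : Set K) = F2Span ![1, z, z ^ 2, z ^ 4] ∨
       (T : Set K) = F2Span ![1, z ^ 11, z ^ 22, z ^ 44])) := by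
  have : CharP K 2 := charP_of_natCard_eq_prime_pow Nat.prime_two T (n := 4) hT16 h1T
  let : Algebra (ZMod 2) K := ZMod.algebra K 2
  let V : Submodule (ZMod 2) K := AddSubgroup.toZModSubmodule 2 T
  have : Finite V := Nat.finite_of_card_ne_zero (hT16.trans_ne (by decide))
  have hdim : Module.finrank (ZMod 2) V = 4 := by
    refine Nat.pow_right_injective le_rfl ?_
    calc 2 ^ Module.finrank (ZMod 2) V = Nat.card V := by
          rw [Module.natCard_eq_pow_finrank (K := ZMod 2), Nat.card_zmod]
      _ = Nat.card T := rfl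
      _ = 2 ^ 4 := hT16
  exact submodule_finrank_four_classification h V hdim h1T hsq hh

/-- classification underlying Theorem 5.12: an additive subgroup `T` of
`F_q` with `|T| = 16`, `1 ∈ T`, closed under squaring, is either `F₁₆` (with `4 ∣ h`),
or `F₄ + F₈` (with `6 ∣ h`), or one of the two spans `⟨1,z,z²,z⁴⟩`, `⟨1,z¹¹,z²²,z⁴⁴⟩`
with `z⁷ = z + 1` (with `7 ∣ h`). -/
theorem subgroup16_classification
    {K : Type*} [Field K] [Fintype K] (h : ℕ)
    (hcard : Fintype.card K = 2 ^ h)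
    (T : AddSubgroup K) (hT16 : Nat.card T = 16) (h1T : (1 : K) ∈ T)
    (hsq : ∀ x ∈ T, x ^ 2 ∈ T) :
    (4 ∣ h ∧ (T : Set K) = {x : K | x ^ 16 = x}) ∨
    (6 ∣ h ∧ (T : Set K) = {x : K | ∃ u v : K, u ^ 4 = u ∧ v ^ 8 = v ∧ x = u + v}) ∨
    (7 ∣ h ∧ ∃ z : K, z ^ 7 = z + 1 ∧
      ((T : Set K) = F2Span ![1, z, z ^ 2, z ^ 4] ∨
       (T : Set K) = F2Span ![1, z ^ 11, z ^ 22, z ^ 44])) := by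
  exact subgroup16_classification_general h T hT16 h1T hsq fun x _ ↦ hcard ▸ FiniteField.pow_card x
end
end
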